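/- arXiv:0706.0690 — 8 statements merged into one kernel-verified Lean document; each statement's English description precedes it below -/
import Mathlib

section
/- Let $K$ be a field of characteristic $0$, let $V$ be a nonzero finite-dimensional $K$-vector space, and let $u, v$ be natural numbers with $u \neq v$. If $T \colon V^{\otimes u} \to V^{\otimes v}$ is a $K$-linear map that is invariant under the diagonal action of $\mathrm{GL}_K(V)$, i.e. $g^{\otimes v} \circ T = T \circ g^{\otimes u}$ for every invertible $K$-linear automorphism $g$ of $V$, then $T = 0$. -/
open scoped TensorProduct

/-!
A homothety `a • id` acts on `V^{⊗u}` by the scalar `a ^ u` and on `V^{⊗v}` by `a ^ v`, so a map `T`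
commuting with it satisfies `a ^ v • T = a ^ u • T`. Over an infinite field some `a ≠ 0` has
`a ^ v ≠ a ^ u`, which forces `T = 0`.
-/

section Homothety

variable {R M N ι κ : Type*} [CommSemiring R] [AddCommMonoid M] [Module R M] [AddCommMonoid N]
  [Module R N] [Fintype ι] [Fintype κ]

theorem piTensorProduct_map_smul_id (a : R) :
    PiTensorProduct.map (fun _ : ι => a • (LinearMap.id : M →ₗ[R] M)) =
      a ^ Fintype.card ι • LinearMap.id := by
  classical
  simpa only [PiTensorProduct.mapMultilinear_apply, PiTensorProduct.map_id, Finset.prod_const,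
    Finset.card_univ] using
    (PiTensorProduct.mapMultilinear R (fun _ : ι => M) (fun _ => M)).map_smul_univ
      (fun _ => a) (fun _ => LinearMap.id)

theorem pow_card_smul_eq_of_comp_map_smul_id {a : R}
    {T : (⨂[R] _ : ι, M) →ₗ[R] ⨂[R] _ : κ, N}
    (hT : PiTensorProduct.map (fun _ => a • LinearMap.id) ∘ₗ T =
      T ∘ₗ PiTensorProduct.map (fun _ => a • LinearMap.id)) :
    a ^ Fintype.card κ • T = a ^ Fintype.card ι • T := by
  simpa only [piTensorProduct_map_smul_id, LinearMap.smul_comp, LinearMap.comp_smul,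
    LinearMap.id_comp, LinearMap.comp_id] using hT

end Homothety

theorem exists_ne_zero_pow_ne_pow (R : Type*) [CommRing R] [IsDomain R] [Infinite R] {m n : ℕ}
    (hmn : m ≠ n) : ∃ a : R, a ≠ 0 ∧ a ^ m ≠ a ^ n := by
  by_contra! h
  -- The extra factor `X` makes the two monomials agree at `0` as well.
  have hX : (Polynomial.X : Polynomial R) ^ (m + 1) = Polynomial.X ^ (n + 1) := by
    refine Polynomial.funext fun a => ?_
    rcases eq_or_ne a 0 with rfl | ha
    · simp
    · simp [pow_succ, h a ha]
  have hdeg : m + 1 = n + 1 := by simpa using congrArg Polynomial.natDegree hX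
  exact hmn (Nat.succ_injective hdeg)

theorem tensorPower_invariant_eq_zero_of_ne_general {K V W : Type*} [Field K] [Infinite K]
    [AddCommGroup V] [Module K V] [AddCommGroup W] [Module K W] {u v : ℕ} (huv : u ≠ v)
    (T : TensorPower K u V →ₗ[K] TensorPower K v W)
    (hT : ∀ a : K, a ≠ 0 → PiTensorProduct.map (fun _ => a • LinearMap.id) ∘ₗ T =
      T ∘ₗ PiTensorProduct.map (fun _ => a • LinearMap.id)) :
    T = 0 := by
  obtain ⟨a, ha, hpow⟩ := exists_ne_zero_pow_ne_pow K huv.symm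
  have hsmul : a ^ v • T = a ^ u • T := by
    simpa only [Fintype.card_fin] using pow_card_smul_eq_of_comp_map_smul_id (hT a ha)
  by_contra hT0
  exact hpow (smul_left_injective K hT0 hsmul)

/-- **First principal theorem of classical invariant theory (vanishing part).**
If `u ≠ v`, any `GL(V)`-equivariant (i.e. invariant) linear map
`V^{⊗u} → V^{⊗v}` is zero, over a field of characteristic zero. -/
theorem tensorPower_invariant_eq_zero_of_ne
    (K V : Type*) [Field K] [CharZero K] [AddCommGroup V] [Module K V]
    [FiniteDimensional K V] [Nontrivial V] (u v : ℕ) (huv : u ≠ v)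
    (T : TensorPower K u V →ₗ[K] TensorPower K v V)
    (hT : ∀ g : V ≃ₗ[K] V,
      (PiTensorProduct.map (fun _ : Fin v => (g : V →ₗ[K] V))).comp T
        = T.comp (PiTensorProduct.map (fun _ : Fin u => (g : V →ₗ[K] V)))) :
    T = 0 :=
  tensorPower_invariant_eq_zero_of_ne_general huv T
    fun a ha => hT (LinearEquiv.smulOfNeZero K V a ha)
end

section
/- Let $K$ be a field of characteristic $0$, let $V$ be a nonzero finite-dimensional $K$-vector space, and let $u$ be a natural number. If $T \colon V^{\otimes u} \to V^{\otimes u}$ is a $K$-linear endomorphism such that $g^{\otimes u} \circ T = T \circ g^{\otimes u}$ for every invertible $K$-linear automorphism $g$ of $V$, then $T$ belongs to the $K$-linear span of the permutation operators $\{P_\sigma : \sigma \in \mathfrak{S}_u\}$. -/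
open scoped TensorProduct

/-!
By Maschke's theorem `V^{⊗u}` is a semisimple module over the group algebra of the symmetric group,
so by Jacobson density an operator lies in the image of that algebra as soon as it commutes with
every operator commuting with all permutations. It therefore suffices to show that an operator `f`
commuting with all permutations is a linear combination of operators `g^{⊗u}`, `g ∈ GL(V)`.

Since `f` equals its own average over conjugation by permutations, and `f` is a combination
of operators `φ₁ ⊗ ⋯ ⊗ φᵤ`, one only has to treat the symmetrisation of `φ₁ ⊗ ⋯ ⊗ φᵤ`, which by
polarization is a combination of operators `ψ^{⊗u}`. Finally, a linear form vanishing on all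
`g^{⊗u}` also vanishes on `ψ^{⊗u}`: its value at `(ψ - t)^{⊗u}` is a polynomial in `t` that
vanishes whenever `t` is not an eigenvalue of `ψ`.
-/

section Multilinear

variable {ι : Type*}

lemma exists_polynomial_eval_eq_multilinearMap_add_smul {R : Type*} {M : ι → Type*} [Finite ι]
    [CommSemiring R] [∀ i, AddCommMonoid (M i)] [∀ i, Module R (M i)]
    (f : MultilinearMap R M R) (a b : ∀ i, M i) :
    ∃ p : Polynomial R, ∀ t : R, p.eval t = f (a + t • b) := by
  classical
  have := Fintype.ofFinite ι
  refine ⟨∑ s : Finset ι, .C (f (s.piecewise a b)) * .X ^ sᶜ.card, fun t ↦ ?_⟩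
  have smul_piecewise (s : Finset ι) :
      s.piecewise a (t • b) = sᶜ.piecewise (fun i ↦ t • s.piecewise a b i) (s.piecewise a b) := by
    ext i
    by_cases hi : i ∈ s <;> simp [hi]
  have map_piecewise (s : Finset ι) :
      f (s.piecewise a (t • b)) = t ^ sᶜ.card * f (s.piecewise a b) := by
    simpa [smul_piecewise] using f.map_piecewise_smul (fun _ ↦ t) (s.piecewise a b) sᶜ
  simp only [f.map_add_univ, map_piecewise, Polynomial.eval_finsetSum, Polynomial.eval_mul,
    Polynomial.eval_C, Polynomial.eval_pow, Polynomial.eval_X, mul_comm]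

lemma multilinearMap_diagonal_mem_of_forall_units {K A N : Type*} [Finite ι]
    [Field K] [Ring A] [Algebra K A] [AddCommGroup N] [Module K N]
    (L : MultilinearMap K (fun _ : ι ↦ A) N) {P : Submodule K N}
    (hL : ∀ g : Aˣ, L (fun _ ↦ ↑g) ∈ P) {a : A} (ha : (spectrum K a)ᶜ.Infinite) :
    L (fun _ ↦ a) ∈ P := by
  by_contra hLa
  obtain ⟨l, hla, hlP⟩ := P.exists_le_ker_of_notMem hLa
  obtain ⟨p, hp⟩ := exists_polynomial_eval_eq_multilinearMap_add_smul
    (l.compMultilinearMap L) (fun _ ↦ a) (fun _ ↦ -1)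
  have isRoot_of_notMem_spectrum (t : K) (ht : t ∉ spectrum K a) : p.IsRoot t := by
    obtain ⟨g, hg⟩ : IsUnit (a + t • (-1)) := by
      simpa [Algebra.algebraMap_eq_smul_one, add_comm, sub_eq_add_neg] using
        (spectrum.notMem_iff.1 ht).neg
    exact (hp t).trans (hlP (hg ▸ hL g :))
  have p_eq_zero : p = 0 :=
    p.eq_zero_of_infinite_isRoot (ha.mono isRoot_of_notMem_spectrum)
  exact hla (by simpa [p_eq_zero] using (hp 0).symm)

lemma sum_superset_neg_one_pow_card_compl [Fintype ι] [DecidableEq ι] (t : Finset ι) :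
    ∑ s with t ⊆ s, (-1 : ℤ) ^ sᶜ.card = if t = Finset.univ then 1 else 0 := by
  have : ∑ s with t ⊆ s, (-1 : ℤ) ^ sᶜ.card = ∑ s ∈ tᶜ.powerset, (-1 : ℤ) ^ s.card :=
    Finset.sum_bij' (fun s _ ↦ sᶜ) (fun s _ ↦ sᶜ) (by simp) (by simp [Finset.subset_compl_comm])
      (by simp) (by simp) (by simp)
  rw [this, Finset.sum_powerset_neg_one_pow_card]
  simp

theorem multilinearMap_polarization {R M N : Type*} [Fintype ι] [DecidableEq ι]
    [Semiring R] [AddCommMonoid M] [Module R M] [AddCommGroup N] [Module R N]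
    (L : MultilinearMap R (fun _ : ι ↦ M) N) (x : ι → M) :
    ∑ σ : Equiv.Perm ι, L (x ∘ σ) =
      ∑ s : Finset ι, (-1 : ℤ) ^ sᶜ.card • L (fun _ ↦ ∑ j ∈ s, x j) := by
  have coefficient (r : ι → ι) :
      ∑ s with Finset.univ.image r ⊆ s, (-1 : ℤ) ^ sᶜ.card = if r.Bijective then 1 else 0 := by
    simp only [sum_superset_neg_one_pow_card_compl, ← Finset.coe_eq_univ, Finset.coe_image,
      Finset.coe_univ, Set.image_univ, Set.range_eq_univ, Finite.surjective_iff_bijective]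
  have expand (s : Finset ι) : L (fun _ ↦ ∑ j ∈ s, x j) =
      ∑ r : ι → ι, if Finset.univ.image r ⊆ s then L (x ∘ r) else 0 := by
    rw [L.map_sum_finset (fun _ ↦ x) (fun _ ↦ s), ← Finset.sum_filter]
    exact Finset.sum_congr (by ext; simp [Finset.image_subset_iff]) fun _ _ ↦ rfl
  calc
    ∑ σ : Equiv.Perm ι, L (x ∘ σ) = ∑ r : ι → ι, (if r.Bijective then 1 else 0 : ℤ) • L (x ∘ r) :=
      Fintype.sum_of_injective (fun σ : Equiv.Perm ι ↦ (σ : ι → ι)) DFunLike.coe_injective _ _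
        (fun r hr ↦ by rw [if_neg fun h ↦ hr ⟨.ofBijective r h, rfl⟩, zero_smul])
        (fun σ ↦ by rw [if_pos σ.bijective, one_smul])
    _ = ∑ s : Finset ι, (-1 : ℤ) ^ sᶜ.card • L (fun _ ↦ ∑ j ∈ s, x j) := by
      simp_rw [← coefficient, expand, Finset.smul_sum, Finset.sum_smul, smul_ite, smul_zero,
        Finset.sum_filter]
      rw [Finset.sum_comm]

end Multilinear

section Representation

variable {k G W : Type*}

lemma norm_linHom_apply_of_isIntertwiningMap [CommRing k] [Group G] [Fintype G]
    [AddCommGroup W] [Module k W] (ρ : Representation k G W) {f : Module.End k W}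
    (hf : ρ.IsIntertwiningMap ρ f) :
    (ρ.linHom ρ).norm f = (Fintype.card G : k) • f := by
  have invariant := (Representation.mem_linHom_invariants_iff_isIntertwining f).2 hf
  simp [Representation.norm, invariant, Nat.cast_smul_eq_nsmul]

theorem exists_asAlgebraHom_eq_of_forall_commute [Field k] [Monoid G] [AddCommGroup W]
    [Module k W] [Module.Finite k W] (ρ : Representation k G W) [ρ.IsSemisimpleRepresentation]
    {T : Module.End k W} (hT : ∀ f : Module.End k W, ρ.IsIntertwiningMap ρ f → Commute f T) :
    ∃ a, ρ.asAlgebraHom a = T := by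
  let S := Module.End (MonoidAlgebra k G) ρ.asModule
  have : Module.Finite k ρ.asModule := ‹Module.Finite k W›
  have : IsSemisimpleModule (MonoidAlgebra k G) ρ.asModule :=
    (ρ.isSemisimpleRepresentation_iff_isSemisimpleModule_asModule).1 ‹_›
  have : Module.Finite S ρ.asModule := .of_restrictScalars_finite k S ρ.asModule
  have apply_comm (e : S) (x : W) :
      T (ρ.asModuleEquiv (e (ρ.asModuleEquiv.symm x))) =
        ρ.asModuleEquiv (e (ρ.asModuleEquiv.symm (T x))) := by
    let f := (Representation.IntertwiningMap.equivLinearMapAsModule ρ ρ).symm e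
    exact LinearMap.congr_fun (hT f.toLinearMap ⟨f.isIntertwining⟩).symm x
  let F : Module.End S ρ.asModule :=
    { toFun x := ρ.asModuleEquiv.symm (T (ρ.asModuleEquiv x))
      map_add' _ _ := by simp
      map_smul' e x := apply_comm e (ρ.asModuleEquiv x) }
  obtain ⟨a, ha⟩ := Module.Finite.toModuleEnd_moduleEnd_surjective F
  exact ⟨a, LinearMap.ext fun x ↦ LinearMap.congr_fun ha x⟩

lemma asAlgebraHom_mem_span_range [CommSemiring k] [Monoid G] [AddCommMonoid W] [Module k W]
    (ρ : Representation k G W) (a : MonoidAlgebra k G) :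
    ρ.asAlgebraHom a ∈ Submodule.span k (Set.range ρ) := by
  rw [Representation.asAlgebraHom_def, MonoidAlgebra.lift_apply]
  exact Submodule.sum_mem _ fun g _ ↦ Submodule.smul_mem _ _ (Submodule.subset_span ⟨g, rfl⟩)

end Representation

section TensorPower

variable {ι : Type*}

theorem span_range_piTensorProduct_map [Finite ι] {R : Type*} {M N : ι → Type*} [CommSemiring R]
    [∀ i, AddCommMonoid (M i)] [∀ i, Module R (M i)] [∀ i, Module.Free R (M i)]
    [∀ i, Module.Finite R (M i)] [∀ i, AddCommMonoid (N i)] [∀ i, Module R (N i)]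
    [∀ i, Module.Free R (N i)] [∀ i, Module.Finite R (N i)] :
    Submodule.span R (Set.range fun φ : ∀ i, M i →ₗ[R] N i ↦ PiTensorProduct.map φ) = ⊤ := by
  classical
  have := Fintype.ofFinite ι
  let b (i) := Module.Free.chooseBasis R (M i)
  let c (i) := Module.Free.chooseBasis R (N i)
  let B := Basis.piTensorProduct b
  let C := Basis.piTensorProduct c
  have matrixUnit_eq_map (q p) :
      B.linearMap C (q, p) = PiTensorProduct.map fun i ↦ (b i).linearMap (c i) (q i, p i) := by
    refine B.ext fun r ↦ ?_
    rw [Module.Basis.linearMap_apply_apply]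
    simp only [B, Basis.piTensorProduct_apply, PiTensorProduct.map_tprod,
      Module.Basis.linearMap_apply_apply]
    split_ifs with hpr
    · simp [C, hpr]
    · obtain ⟨i, hi⟩ := Function.ne_iff.1 hpr
      exact ((PiTensorProduct.tprod R).map_coord_zero i (if_neg hi)).symm
  rw [eq_top_iff, ← (B.linearMap C).span_eq]
  refine Submodule.span_mono ?_
  rintro _ ⟨⟨q, p⟩, rfl⟩
  exact ⟨_, (matrixUnit_eq_map q p).symm⟩

/-- The representation of the symmetric group of `ι` on `⨂ᵢ M` permuting the tensor factors. -/
noncomputable def permTensorRepresentation (R ι M : Type*) [CommSemiring R] [AddCommMonoid M]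
    [Module R M] : Representation R (Equiv.Perm ι) (⨂[R] _ : ι, M) where
  toFun σ := (PiTensorProduct.reindex R (fun _ ↦ M) σ).toLinearMap
  map_one' := by
    rw [Equiv.Perm.one_def, PiTensorProduct.reindex_refl]
    rfl
  map_mul' σ τ := congrArg LinearEquiv.toLinearMap (PiTensorProduct.reindex_trans τ σ).symm

lemma linHom_permTensorRepresentation_apply_map {R M : Type*} [CommSemiring R] [AddCommMonoid M]
    [Module R M] (σ : Equiv.Perm ι) (φ : ι → Module.End R M) :
    (permTensorRepresentation R ι M).linHom (permTensorRepresentation R ι M) σ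
      (PiTensorProduct.map φ) = PiTensorProduct.map (φ ∘ ⇑σ⁻¹) := by
  set ρ := permTensorRepresentation R ι M
  have comp_map : ρ σ ∘ₗ PiTensorProduct.map φ = PiTensorProduct.map (φ ∘ ⇑σ⁻¹) ∘ₗ ρ σ :=
    (PiTensorProduct.map_comp_reindex_eq φ σ).symm
  rw [Representation.linHom_apply, ← LinearMap.comp_assoc, comp_map, LinearMap.comp_assoc,
    ← Module.End.mul_eq_comp (ρ σ), ← map_mul, mul_inv_cancel, map_one, Module.End.one_eq_id,
    LinearMap.comp_id]

lemma norm_linHom_permTensorRepresentation_map {R M : Type*} [Fintype ι] [DecidableEq ι]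
    [CommSemiring R] [AddCommMonoid M] [Module R M] (φ : ι → Module.End R M) :
    ((permTensorRepresentation R ι M).linHom (permTensorRepresentation R ι M)).norm
      (PiTensorProduct.map φ) = ∑ σ : Equiv.Perm ι, PiTensorProduct.map (φ ∘ σ) := by
  rw [Representation.norm, LinearMap.sum_apply]
  simp only [linHom_permTensorRepresentation_apply_map]
  exact Equiv.sum_comp (Equiv.inv _) fun σ : Equiv.Perm ι ↦ PiTensorProduct.map (φ ∘ σ)

/-- The linear span of the operators `g^{⊗ι}` for `g ∈ GL(M)`. Over an infinite field it is the
Schur algebra of `M`, here seen only as a submodule of the endomorphisms of `⨂ᵢ M`. -/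
noncomputable def generalLinearTensorSpan (R ι M : Type*) [CommSemiring R] [AddCommMonoid M]
    [Module R M] : Submodule R (Module.End R (⨂[R] _ : ι, M)) :=
  Submodule.span R (Set.range fun g : M ≃ₗ[R] M ↦ PiTensorProduct.map fun _ ↦ (g : M →ₗ[R] M))

variable {K V : Type*} [Field K] [Infinite K] [AddCommGroup V] [Module K V] [FiniteDimensional K V]

lemma map_const_mem_generalLinearTensorSpan [Finite ι] (φ : Module.End K V) :
    PiTensorProduct.map (fun _ ↦ φ) ∈ generalLinearTensorSpan K ι V :=
  multilinearMap_diagonal_mem_of_forall_units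
    (PiTensorProduct.mapMultilinear K (fun _ : ι ↦ V) fun _ ↦ V)
    (fun g ↦ Submodule.subset_span
      (Set.mem_range_self (LinearMap.GeneralLinearGroup.toLinearEquiv g)))
    (Module.End.finite_spectrum φ).infinite_compl

lemma norm_linHom_mem_generalLinearTensorSpan [Fintype ι] [DecidableEq ι]
    (f : Module.End K (⨂[K] _ : ι, V)) :
    ((permTensorRepresentation K ι V).linHom (permTensorRepresentation K ι V)).norm f ∈
      generalLinearTensorSpan K ι V := by
  set ν := ((permTensorRepresentation K ι V).linHom (permTensorRepresentation K ι V)).norm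
  suffices ⊤ ≤ (generalLinearTensorSpan K ι V).comap ν from this (Submodule.mem_top : f ∈ ⊤)
  rw [← span_range_piTensorProduct_map, Submodule.span_le]
  rintro _ ⟨φ, rfl⟩
  have polarization := multilinearMap_polarization
    (PiTensorProduct.mapMultilinear K (fun _ : ι ↦ V) fun _ ↦ V) φ
  simp only [PiTensorProduct.mapMultilinear_apply] at polarization
  rw [SetLike.mem_coe, Submodule.mem_comap, norm_linHom_permTensorRepresentation_map]
  exact polarization ▸ Submodule.sum_mem _ fun s _ ↦
    Submodule.smul_of_tower_mem _ _ (map_const_mem_generalLinearTensorSpan _)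

theorem isIntertwiningMap_mem_generalLinearTensorSpan [Finite ι]
    (hι : ((Nat.card ι).factorial : K) ≠ 0) {f : Module.End K (⨂[K] _ : ι, V)}
    (hf : (permTensorRepresentation K ι V).IsIntertwiningMap (permTensorRepresentation K ι V) f) :
    f ∈ generalLinearTensorSpan K ι V := by
  classical
  have := Fintype.ofFinite ι
  have norm_mem := norm_linHom_mem_generalLinearTensorSpan f
  rw [norm_linHom_apply_of_isIntertwiningMap _ hf, Fintype.card_perm, ← Nat.card_eq_fintype_card]
    at norm_mem
  exact (Submodule.smul_mem_iff _ hι).1 norm_mem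

lemma commute_of_mem_generalLinearTensorSpan {R M : Type*} [CommSemiring R] [AddCommMonoid M]
    [Module R M] {f T : Module.End R (⨂[R] _ : ι, M)} (hf : f ∈ generalLinearTensorSpan R ι M)
    (hT : ∀ g : M ≃ₗ[R] M, Commute (PiTensorProduct.map fun _ ↦ (g : M →ₗ[R] M)) T) :
    Commute f T := by
  induction hf using Submodule.span_induction with
  | mem _ hg =>
    obtain ⟨g, rfl⟩ := hg
    exact hT g
  | zero => exact .zero_left T
  | add _ _ _ _ hf₁ hf₂ => exact hf₁.add_left hf₂
  | smul c _ _ hf => exact hf.smul_left c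

theorem tensorPower_invariant_mem_span_perm_general [Finite ι]
    (hι : ((Nat.card ι).factorial : K) ≠ 0) {T : Module.End K (⨂[K] _ : ι, V)}
    (hT : ∀ g : V ≃ₗ[K] V, Commute (PiTensorProduct.map fun _ ↦ (g : V →ₗ[K] V)) T) :
    T ∈ Submodule.span K (Set.range fun σ : Equiv.Perm ι ↦
      (PiTensorProduct.reindex K (fun _ ↦ V) σ).toLinearMap) := by
  have : NeZero (Nat.card (Equiv.Perm ι) : K) := ⟨by rwa [Nat.card_perm]⟩
  obtain ⟨a, rfl⟩ := exists_asAlgebraHom_eq_of_forall_commute (permTensorRepresentation K ι V)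
    fun f hf ↦ commute_of_mem_generalLinearTensorSpan
      (isIntertwiningMap_mem_generalLinearTensorSpan hι hf) hT
  exact asAlgebraHom_mem_span_range (permTensorRepresentation K ι V) a

end TensorPower

/-- **First principal theorem of classical invariant theory.**
Over a field of characteristic zero, a `GL(V)`-invariant endomorphism of `V^{⊗u}`
is a linear combination of the permutation operators permuting the tensor factors. -/
theorem tensorPower_invariant_mem_span_perm
    (K V : Type*) [Field K] [CharZero K] [AddCommGroup V] [Module K V]
    [FiniteDimensional K V] [Nontrivial V] (u : ℕ)
    (T : TensorPower K u V →ₗ[K] TensorPower K u V)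
    (hT : ∀ g : V ≃ₗ[K] V,
      (PiTensorProduct.map (fun _ : Fin u => (g : V →ₗ[K] V))).comp T
        = T.comp (PiTensorProduct.map (fun _ : Fin u => (g : V →ₗ[K] V)))) :
    T ∈ Submodule.span K
      (Set.range fun σ : Equiv.Perm (Fin u) =>
        ((PiTensorProduct.reindex K (fun _ : Fin u => V) σ).toLinearMap :
          TensorPower K u V →ₗ[K] TensorPower K u V)) :=
  tensorPower_invariant_mem_span_perm_general (Nat.cast_ne_zero.2 (Nat.factorial_ne_zero _)) hT
end

section
/- Let $K$ be a field of characteristic $0$, let $V_1, \ldots, V_n$ be nonzero finite-dimensional $K$-vector spaces, and let $\alpha \colon \{1,\ldots,n\} \to \mathbb{N}$ be a map. Write $V^\alpha = V_1^{\otimes \alpha(1)} \otimes \cdots \otimes V_n^{\otimes \alpha(n)}$. If $T \colon V^\alpha \to V^\alpha$ is a $K$-linear endomorphism such that $(g_1^{\otimes \alpha(1)} \otimes \cdots \otimes g_n^{\otimes \alpha(n)}) \circ T = T \circ (g_1^{\otimes \alpha(1)} \otimes \cdots \otimes g_n^{\otimes \alpha(n)})$ for all $(g_1,\ldots,g_n)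 \in \mathrm{GL}_K(V_1) \times \cdots \times \mathrm{GL}_K(V_n)$, then $T$ lies in the $K$-linear span of the operators $P_{\sigma_1} \otimes \cdots \otimes P_{\sigma_n}$ for $(\sigma_1,\ldots,\sigma_n) \in \mathfrak{S}_{\alpha(1)} \times \cdots \times \mathfrak{S}_{\alpha(n)}$, where $P_{\sigma_i}$ permutes the tensor factors of $V_i^{\otimes \alpha(i)}$. -/
open scoped TensorProduct

/-!
Let `𝔖 = ∏ 𝔖_{α(i)}` act on `V^α` by place permutations. By Maschke's theorem and Jacobson density
it suffices that `T` commutes with every `𝔖`-equivariant endomorphism `S`, and for this that `S` is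
a linear combination of operators `⨂ gᵢ^{⊗α(i)}` with `gᵢ ∈ GL(Vᵢ)`.

Now `|𝔖| • S = ∑ σ S σ⁻¹`, the norm of `S` in the conjugation representation, and `S` is a linear
combination of operators `⨂ᵢ ⨂ⱼ fᵢⱼ`, so everything reduces to a single tensor power, where the norm
of `⨂ⱼ fⱼ` is `∑ σ, ⨂ⱼ f_{σ j}`. Polarisation expresses this sum through the diagonal operators
`x^{⊗m}`, with `x` a partial sum of the `fⱼ`. Finally `x + t • 1` is invertible for all but finitely
many scalars `t`, and a linear functional evaluated at `(x + t • 1)^{⊗m}` is polynomial in `t`; so a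
functional vanishing on all `g^{⊗m}` with `g ∈ GL(V)` vanishes on `x^{⊗m}`.
-/

namespace SchurWeyl

section Multilinear

variable {R ι : Type*} [CommSemiring R]

theorem multilinearMap_apply_mem_of_forall_mem_span [Finite ι] {E : ι → Type*} {F : Type*}
    [∀ i, AddCommMonoid (E i)] [∀ i, Module R (E i)] [AddCommMonoid F] [Module R F]
    (M : MultilinearMap R E F) {A : ∀ i, Set (E i)} {N : Submodule R F}
    (hA : ∀ a, (∀ i, a i ∈ A i) → M a ∈ N) {x : ∀ i, E i}
    (hx : ∀ i, x i ∈ Submodule.span R (A i)) : M x ∈ N := by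
  classical
  have := Fintype.ofFinite ι
  choose k c a hca using fun i => Submodule.mem_span_set'.1 (hx i)
  obtain rfl : (fun i => ∑ j, c i j • (a i j : E i)) = x := funext hca
  rw [M.map_sum]
  refine N.sum_mem fun r _ => ?_
  rw [M.map_smul_univ (fun i => c i (r i)) fun i => (a i (r i) : E i)]
  exact N.smul_mem _ (hA _ fun i => (a i (r i)).2)

theorem sum_powerset_compl_image_neg_one_pow_card [Fintype ι] [DecidableEq ι] (r : ι → ι) :
    ∑ u ∈ (Finset.univ.image r)ᶜ.powerset, (-1 : ℤ) ^ u.card =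
      if Function.Bijective r then 1 else 0 := by
  rw [Finset.sum_powerset_neg_one_pow_card]
  refine if_congr ?_ rfl rfl
  rw [Finset.compl_eq_empty_iff, ← Finset.coe_eq_univ, Finset.coe_image, Finset.coe_univ,
    Set.image_univ, Set.range_eq_univ, Finite.surjective_iff_bijective]

theorem sum_perm_multilinearMap_apply [Fintype ι] [DecidableEq ι] {E F : Type*} [AddCommMonoid E]
    [Module R E] [AddCommGroup F] [Module R F] (M : MultilinearMap R (fun _ : ι => E) F)
    (f : ι → E) :
    ∑ σ : Equiv.Perm ι, M (fun i => f (σ i)) =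
      ∑ u : Finset ι, (-1 : ℤ) ^ u.card • M (fun _ => ∑ i ∈ uᶜ, f i) := by
  -- Inclusion–exclusion over sets `u` of values omitted by `r` singles out the surjective `r`.
  calc ∑ σ : Equiv.Perm ι, M (fun i => f (σ i))
    _ = ∑ r : ι → ι, ∑ u ∈ (Finset.univ.image r)ᶜ.powerset,
          (-1 : ℤ) ^ u.card • M (fun i => f (r i)) := by
      simp_rw [← Finset.sum_smul, sum_powerset_compl_image_neg_one_pow_card]
      refine Fintype.sum_of_injective _ DFunLike.coe_injective _ _ (fun r hr => ?_) fun σ => ?_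
      · rw [if_neg fun h => hr ⟨Equiv.ofBijective r h, rfl⟩, zero_smul]
      · rw [if_pos σ.bijective, one_smul]
    _ = ∑ u : Finset ι, ∑ r ∈ Fintype.piFinset fun _ => uᶜ,
          (-1 : ℤ) ^ u.card • M (fun i => f (r i)) := by
      refine Finset.sum_comm' fun r u => ?_
      simp only [Finset.mem_univ, true_and, and_true, Finset.mem_powerset,
        Finset.subset_compl_comm (s := u), Finset.image_subset_iff, Fintype.mem_piFinset,
        forall_const]
    _ = ∑ u : Finset ι, (-1 : ℤ) ^ u.card • M (fun _ => ∑ i ∈ uᶜ, f i) := by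
      simp_rw [M.map_sum_finset (fun _ => f), Finset.smul_sum]

theorem exists_polynomial_eval_eq_multilinearMap [Finite ι] {E : Type*} [AddCommMonoid E]
    [Module R E] (φ : MultilinearMap R (fun _ : ι => E) R) (x y : E) :
    ∃ p : Polynomial R, ∀ t, p.eval t = φ (fun _ => x + t • y) := by
  classical
  have := Fintype.ofFinite ι
  let v (s : Finset ι) : ι → E := s.piecewise (fun _ => x) fun _ => y
  refine ⟨∑ s, .X ^ sᶜ.card * .C (φ (v s)), fun t => ?_⟩
  have expand (s : Finset ι) :
      φ (s.piecewise (fun _ => x) fun _ => t • y) = t ^ sᶜ.card * φ (v s) := by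
    have := φ.map_piecewise_smul (fun _ => t) (v s) sᶜ
    rw [Finset.prod_const, smul_eq_mul] at this
    rw [← this]
    congr 1
    ext i
    by_cases hi : i ∈ s <;> simp [v, hi]
  simp only [Polynomial.eval_finsetSum, Polynomial.eval_mul, Polynomial.eval_pow,
    Polynomial.eval_X, Polynomial.eval_C, ← expand]
  exact (φ.map_add_univ (fun _ => x) fun _ => t • y).symm

end Multilinear

section Density

variable {K ι F : Type*} [Field K] [Finite ι] [AddCommGroup F] [Module K F]

theorem multilinearMap_const_mem_of_infinite {E : Type*} [AddCommGroup E] [Module K E]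
    (M : MultilinearMap K (fun _ : ι => E) F) {N : Submodule K F} {x y : E}
    (h : {t : K | M (fun _ => x + t • y) ∈ N}.Infinite) : M (fun _ => x) ∈ N := by
  by_contra hx
  obtain ⟨φ, hφ, hφN⟩ := Submodule.exists_le_ker_of_notMem hx
  obtain ⟨p, hp⟩ := exists_polynomial_eval_eq_multilinearMap (φ.compMultilinearMap M) x y
  have hp_zero : p = 0 :=
    p.eq_zero_of_infinite_isRoot (h.mono fun t ht => (hp t).trans (hφN ht))
  exact hφ (by simpa [hp_zero] using (hp 0).symm)

theorem multilinearMap_const_mem_of_forall_linearEquiv [Infinite K] {V : Type*} [AddCommGroup V]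
    [Module K V] [FiniteDimensional K V] (M : MultilinearMap K (fun _ : ι => V →ₗ[K] V) F)
    {N : Submodule K F} (hN : ∀ g : V ≃ₗ[K] V, M (fun _ => (g : V →ₗ[K] V)) ∈ N)
    (x : V →ₗ[K] V) : M (fun _ => x) ∈ N := by
  refine multilinearMap_const_mem_of_infinite M (y := 1)
    ((Module.End.finite_spectrum (-x)).infinite_compl.mono fun t ht => ?_)
  obtain ⟨u, hu⟩ : IsUnit (x + t • 1) := by
    simpa [spectrum.mem_iff, Algebra.algebraMap_eq_smul_one, add_comm] using ht
  rw [Set.mem_ofPred_eq, ← hu]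
  exact hN (LinearMap.GeneralLinearGroup.generalLinearEquiv K V u)

end Density

section PiTensorProduct

variable {R ι : Type*} [CommSemiring R] [Finite ι] {V W : ι → Type*}
  [∀ i, AddCommMonoid (V i)] [∀ i, Module R (V i)] [∀ i, Module.Free R (V i)]
  [∀ i, Module.Finite R (V i)]
  [∀ i, AddCommMonoid (W i)] [∀ i, Module R (W i)] [∀ i, Module.Free R (W i)]
  [∀ i, Module.Finite R (W i)]

theorem span_range_piTensorProduct_map_eq_top :
    Submodule.span R (Set.range fun f : ∀ i, V i →ₗ[R] W i => PiTensorProduct.map f) = ⊤ := by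
  classical
  have := Fintype.ofFinite ι
  let b i := Module.Free.chooseBasis R (V i)
  let c i := Module.Free.chooseBasis R (W i)
  let B := (Basis.piTensorProduct b).linearMap (Basis.piTensorProduct c)
  have hB p q : B (p, q) = PiTensorProduct.map fun i => (b i).linearMap (c i) (p i, q i) := by
    refine (Basis.piTensorProduct b).ext fun r => ?_
    rw [Module.Basis.linearMap_apply_apply, Basis.piTensorProduct_apply,
      Basis.piTensorProduct_apply, PiTensorProduct.map_tprod]
    simp only [Module.Basis.linearMap_apply_apply]
    split_ifs with h
    · simp [h]
    · obtain ⟨i, hi⟩ := Function.ne_iff.1 h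
      exact ((PiTensorProduct.tprod R).map_coord_zero i (if_neg hi)).symm
  rw [eq_top_iff, ← B.span_eq]
  refine Submodule.span_mono ?_
  rintro _ ⟨⟨p, q⟩, rfl⟩
  exact ⟨_, (hB p q).symm⟩

theorem linearMap_apply_mem_of_forall_piTensorProduct_map {F : Type*} [AddCommMonoid F] [Module R F]
    (L : ((⨂[R] i, V i) →ₗ[R] ⨂[R] i, W i) →ₗ[R] F) {N : Submodule R F}
    (hN : ∀ f : ∀ i, V i →ₗ[R] W i, L (PiTensorProduct.map f) ∈ N)
    (x : (⨂[R] i, V i) →ₗ[R] ⨂[R] i, W i) : L x ∈ N := by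
  suffices ⊤ ≤ N.comap L from this Submodule.mem_top
  rw [← span_range_piTensorProduct_map_eq_top, Submodule.span_le]
  rintro _ ⟨f, rfl⟩
  exact hN f

end PiTensorProduct

section Representation

theorem exists_eq_smul_of_forall_moduleEnd_comm {K R M : Type*} [CommSemiring K] [Ring R]
    [Algebra K R] [AddCommGroup M] [Module K M] [Module R M] [IsScalarTower K R M]
    [IsSemisimpleModule R M] [Module.Finite K M] {T : M →ₗ[K] M}
    (hT : ∀ (S : Module.End R M) (m : M), T (S m) = S (T m)) :
    ∃ r : R, ∀ m, T m = r • m := by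
  have : Module.Finite (Module.End R M) M := .of_restrictScalars_finite K _ _
  let T' : Module.End (Module.End R M) M := { T with map_smul' := hT }
  obtain ⟨r, hr⟩ := Module.Finite.toModuleEnd_moduleEnd_surjective (R := R) T'
  exact ⟨r, fun m => (LinearMap.congr_fun hr m).symm⟩

theorem mem_span_range_of_forall_intertwiningMap {K G W : Type*} [Field K] [Monoid G]
    [AddCommGroup W] [Module K W] [FiniteDimensional K W] (ρ : Representation K G W)
    [ρ.IsSemisimpleRepresentation] {T : W →ₗ[K] W}
    (hT : ∀ S : ρ.IntertwiningMap ρ, T ∘ₗ S.toLinearMap = S.toLinearMap ∘ₗ T) :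
    T ∈ Submodule.span K (Set.range ρ) := by
  have : IsSemisimpleModule (MonoidAlgebra K G) ρ.asModule :=
    ρ.isSemisimpleRepresentation_iff_isSemisimpleModule_asModule.1 inferInstance
  obtain ⟨r, hr⟩ := exists_eq_smul_of_forall_moduleEnd_comm (R := MonoidAlgebra K G)
    (T := ρ.asModuleEquiv.symm.conj T) fun S => LinearMap.congr_fun
      (hT ((Representation.IntertwiningMap.equivAlgEnd ρ).symm S))
  obtain rfl : ρ.asAlgebraHom r = T := LinearMap.ext fun w => (hr w).symm
  rw [Representation.asAlgebraHom_def, MonoidAlgebra.lift_apply]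
  exact Submodule.sum_mem _ fun g _ => Submodule.smul_mem _ _ (Submodule.subset_span ⟨g, rfl⟩)

theorem norm_linHom_apply_intertwiningMap {K G W : Type*} [CommSemiring K] [Group G] [Fintype G]
    [AddCommMonoid W] [Module K W] (ρ : Representation K G W) (S : ρ.IntertwiningMap ρ) :
    (ρ.linHom ρ).norm S.toLinearMap = Fintype.card G • S.toLinearMap := by
  have hS (g : G) : ρ.linHom ρ g S.toLinearMap = S.toLinearMap := by
    ext w
    simp [S.isIntertwining]
  simp [Representation.norm, hS]

end Representation

section PiTensorRep

variable {K ι : Type*} {G : ι → Type*} {W : ι → Type*} [∀ i, Group (G i)]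

section CommSemiring

variable [CommSemiring K] [∀ i, AddCommMonoid (W i)] [∀ i, Module K (W i)]

/-- The external tensor product of representations `ρ i` of the groups `G i`, as a representation
of the product group on `⨂[K] i, W i`. -/
def piTensorRep (ρ : ∀ i, Representation K (G i) (W i)) :
    Representation K (∀ i, G i) (⨂[K] i, W i) :=
  PiTensorProduct.mapMonoidHom.comp (MonoidHom.pi fun i => (ρ i).comp (Pi.evalMonoidHom G i))

theorem piTensorRep_apply (ρ : ∀ i, Representation K (G i) (W i)) (σ : ∀ i, G i) :
    piTensorRep ρ σ = PiTensorProduct.map fun i => ρ i (σ i) := rfl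

variable [Fintype ι] [DecidableEq ι] [∀ i, Fintype (G i)] (ρ : ∀ i, Representation K (G i) (W i))

theorem norm_linHom_piTensorRep_map (f : ∀ i, W i →ₗ[K] W i) :
    ((piTensorRep ρ).linHom (piTensorRep ρ)).norm (PiTensorProduct.map f) =
      PiTensorProduct.map fun i => ((ρ i).linHom (ρ i)).norm (f i) := by
  have hsum := (PiTensorProduct.mapMultilinear K W W).map_sum
    fun i (σ : G i) => (ρ i).linHom (ρ i) σ (f i)
  simp only [PiTensorProduct.mapMultilinear_apply] at hsum
  simp only [Representation.norm, LinearMap.sum_apply, hsum]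
  simp only [Representation.linHom_apply, piTensorRep_apply, Pi.inv_apply,
    PiTensorProduct.map_comp]

theorem norm_linHom_piTensorRep_mem_span [∀ i, Module.Free K (W i)] [∀ i, Module.Finite K (W i)]
    {A : ∀ i, Set (W i →ₗ[K] W i)}
    (hA : ∀ i x, ((ρ i).linHom (ρ i)).norm x ∈ Submodule.span K (A i))
    (x : (⨂[K] i, W i) →ₗ[K] ⨂[K] i, W i) :
    ((piTensorRep ρ).linHom (piTensorRep ρ)).norm x ∈
      Submodule.span K (PiTensorProduct.map '' Set.univ.pi A) := by
  refine linearMap_apply_mem_of_forall_piTensorProduct_map _ (fun f => ?_) x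
  rw [norm_linHom_piTensorRep_map]
  exact multilinearMap_apply_mem_of_forall_mem_span (PiTensorProduct.mapMultilinear K W W)
    (fun a ha => Submodule.subset_span (Set.mem_image_of_mem _ fun i _ => ha i)) fun i => hA i (f i)

end CommSemiring

theorem intertwiningMap_piTensorRep_mem_span [Field K] [∀ i, AddCommGroup (W i)]
    [∀ i, Module K (W i)] [∀ i, FiniteDimensional K (W i)] [Finite ι]
    [∀ i, Fintype (G i)] [NeZero (Nat.card (∀ i, G i) : K)]
    (ρ : ∀ i, Representation K (G i) (W i)) {A : ∀ i, Set (W i →ₗ[K] W i)}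
    (hA : ∀ i x, ((ρ i).linHom (ρ i)).norm x ∈ Submodule.span K (A i))
    (S : (piTensorRep ρ).IntertwiningMap (piTensorRep ρ)) :
    S.toLinearMap ∈ Submodule.span K (PiTensorProduct.map '' Set.univ.pi A) := by
  classical
  have := Fintype.ofFinite ι
  rw [← Submodule.smul_mem_iff _ (NeZero.ne (Nat.card (∀ i, G i) : K)), Nat.cast_smul_eq_nsmul,
    Nat.card_eq_fintype_card, ← norm_linHom_apply_intertwiningMap]
  exact norm_linHom_piTensorRep_mem_span ρ hA _

end PiTensorRep

section TensorPermRep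

variable {K κ V : Type*}

section CommSemiring

variable [CommSemiring K] [AddCommMonoid V] [Module K V]

variable (K κ V) in
/-- The action of the symmetric group on a tensor power of `V` by place permutations: the factor
in place `i` is moved to place `σ i`. -/
noncomputable def tensorPermRep : Representation K (Equiv.Perm κ) (⨂[K] _ : κ, V) where
  toFun σ := (PiTensorProduct.reindex K (fun _ => V) σ).toLinearMap
  map_one' := congrArg LinearEquiv.toLinearMap
    (PiTensorProduct.reindex_refl (R := K) (s := fun _ : κ => V))
  map_mul' σ τ := congrArg LinearEquiv.toLinearMap
    (PiTensorProduct.reindex_trans (R := K) (s := fun _ => V) τ σ).symm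

theorem linHom_tensorPermRep_map (σ : Equiv.Perm κ) (f : κ → V →ₗ[K] V) :
    (tensorPermRep K κ V).linHom (tensorPermRep K κ V) σ (PiTensorProduct.map f) =
      PiTensorProduct.map fun i => f (σ.symm i) := by
  have hcomm : tensorPermRep K κ V σ ∘ₗ PiTensorProduct.map f =
      (PiTensorProduct.map fun i => f (σ.symm i)) ∘ₗ tensorPermRep K κ V σ :=
    (PiTensorProduct.map_comp_reindex_eq f σ).symm
  rw [Representation.linHom_apply, ← LinearMap.comp_assoc, hcomm, LinearMap.comp_assoc,
    ← Module.End.mul_eq_comp (tensorPermRep K κ V σ), ← map_mul, mul_inv_cancel, map_one]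
  rfl

theorem norm_linHom_tensorPermRep_map [Fintype κ] [DecidableEq κ] (f : κ → V →ₗ[K] V) :
    ((tensorPermRep K κ V).linHom (tensorPermRep K κ V)).norm (PiTensorProduct.map f) =
      ∑ σ : Equiv.Perm κ, PiTensorProduct.map fun i => f (σ i) := by
  simp only [Representation.norm, LinearMap.sum_apply, linHom_tensorPermRep_map]
  exact Fintype.sum_equiv (Equiv.inv _) _ _ fun _ => rfl

end CommSemiring

theorem norm_linHom_tensorPermRep_mem_span [Field K] [Infinite K] [AddCommGroup V] [Module K V]
    [FiniteDimensional K V] [Fintype κ] [DecidableEq κ]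
    (x : (⨂[K] _ : κ, V) →ₗ[K] ⨂[K] _ : κ, V) :
    ((tensorPermRep K κ V).linHom (tensorPermRep K κ V)).norm x ∈
      Submodule.span K (Set.range fun g : V ≃ₗ[K] V =>
        PiTensorProduct.map fun _ : κ => (g : V →ₗ[K] V)) := by
  let M := PiTensorProduct.mapMultilinear K (fun _ : κ => V) fun _ : κ => V
  refine linearMap_apply_mem_of_forall_piTensorProduct_map _ (fun f => ?_) x
  have hnorm := (norm_linHom_tensorPermRep_map f).trans (sum_perm_multilinearMap_apply M f)
  rw [hnorm]
  exact Submodule.sum_mem _ fun u _ => zsmul_mem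
    (multilinearMap_const_mem_of_forall_linearEquiv M
      (fun g => Submodule.subset_span (Set.mem_range_self g)) _) _

end TensorPermRep

end SchurWeyl

open SchurWeyl in
theorem multiTensor_invariant_mem_span_perm_general {K ι : Type*} [Field K] [Infinite K] [Finite ι]
    {V : ι → Type*} [∀ i, AddCommGroup (V i)] [∀ i, Module K (V i)]
    [∀ i, FiniteDimensional K (V i)] {κ : ι → Type*} [∀ i, Finite (κ i)]
    (hκ : ∀ i, ((Nat.card (κ i)).factorial : K) ≠ 0)
    {T : (⨂[K] i, ⨂[K] _ : κ i, V i) →ₗ[K] ⨂[K] i, ⨂[K] _ : κ i, V i}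
    (hT : ∀ g : ∀ i, V i ≃ₗ[K] V i,
      (PiTensorProduct.map fun i => PiTensorProduct.map fun _ : κ i => (g i : V i →ₗ[K] V i)) ∘ₗ T =
        T ∘ₗ PiTensorProduct.map fun i =>
          PiTensorProduct.map fun _ : κ i => (g i : V i →ₗ[K] V i)) :
    T ∈ Submodule.span K (Set.range fun σ : ∀ i, Equiv.Perm (κ i) =>
      PiTensorProduct.map fun i =>
        (PiTensorProduct.reindex K (fun _ : κ i => V i) (σ i)).toLinearMap) := by
  classical
  have := Fintype.ofFinite ι
  have (i : ι) := Fintype.ofFinite (κ i)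
  let ρ i := tensorPermRep K (κ i) (V i)
  have : NeZero (Nat.card (∀ i, Equiv.Perm (κ i)) : K) := ⟨by
    simpa only [Nat.card_pi, Nat.card_perm, Nat.cast_prod] using
      Finset.prod_ne_zero_iff.2 fun i _ => hκ i⟩
  refine mem_span_range_of_forall_intertwiningMap (piTensorRep ρ) fun S => ?_
  refine LinearMap.eqOn_span (f := LinearMap.mulLeft K T) (g := LinearMap.mulRight K T) ?_
    (intertwiningMap_piTensorRep_mem_span ρ (fun _ => norm_linHom_tensorPermRep_mem_span) S)
  rintro _ ⟨a, ha, rfl⟩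
  choose g hg using fun i => ha i (Set.mem_univ i)
  obtain rfl := funext hg
  exact (hT g).symm

/-- **First principal theorem for several vector spaces.**
Over a field of characteristic zero, an endomorphism of
`V^α = V₁^{⊗α(1)} ⊗ ⋯ ⊗ Vₙ^{⊗α(n)}` invariant under `GL(V₁) × ⋯ × GL(Vₙ)`
is a linear combination of the operators `P_{σ₁} ⊗ ⋯ ⊗ P_{σₙ}`, where
`σᵢ ∈ 𝔖_{α(i)}` permutes the tensor factors of `Vᵢ^{⊗α(i)}`. -/
theorem multiTensor_invariant_mem_span_perm
    (K : Type*) [Field K] [CharZero K] (n : ℕ) (V : Fin n → Type*)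
    [∀ i, AddCommGroup (V i)] [∀ i, Module K (V i)]
    [∀ i, FiniteDimensional K (V i)] [∀ i, Nontrivial (V i)]
    (α : Fin n → ℕ)
    (T : (⨂[K] i, TensorPower K (α i) (V i)) →ₗ[K] ⨂[K] i, TensorPower K (α i) (V i))
    (hT : ∀ g : ∀ i, V i ≃ₗ[K] V i,
      (PiTensorProduct.map
        (fun i => PiTensorProduct.map (fun _ : Fin (α i) => (g i : V i →ₗ[K] V i)))).comp T
      = T.comp (PiTensorProduct.map
        (fun i => PiTensorProduct.map (fun _ : Fin (α i) => (g i : V i →ₗ[K] V i))))) :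
    T ∈ Submodule.span K
      (Set.range fun σ : ∀ i, Equiv.Perm (Fin (α i)) =>
        (PiTensorProduct.map
          (fun i => ((PiTensorProduct.reindex K (fun _ : Fin (α i) => V i) (σ i)).toLinearMap :
            TensorPower K (α i) (V i) →ₗ[K] TensorPower K (α i) (V i))) :
          (⨂[K] i, TensorPower K (α i) (V i)) →ₗ[K] ⨂[K] i, TensorPower K (α i) (V i))) := by
  have := CharZero.infinite K
  exact multiTensor_invariant_mem_span_perm_general
    (fun _ => Nat.cast_ne_zero.2 (Nat.factorial_ne_zero _)) hT
end

section
/- Let $n \geq 1$ be an integer and let $\mathscr{T}$ be a finite non-empty family of linear forms on $\mathbb{R}^n$. Define $\Lambda \colon \mathbb{R}^n \to \mathbb{R}$ by $\Lambda(y) = \|y\|^{-1} \max_{l \in \mathscr{T}} l(y)$ for $y \neq 0$ and $\Lambda(0) = 0$, where $\|\cdot\|$ is the Euclidean norm. Suppose that $\Lambda$ takes at least one strictly negative value. Then $\Lambda$ attains its minimum value on $\mathbb{R}^n$, and any two points of $\mathbb{R}^n$ at which $\Lambda$ attains its minimum are proportional: if $\Lambda(y) = \Lambda(y') = \min \Lambda$,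 then $y' = t\, y$ for some real $t > 0$. -/
/-!
A maximum `M` of linear forms is sublinear, hence continuous, and `Λ` is constant on open rays, so
a minimum of `Λ` is found on the compact unit sphere. If `m < 0` is the minimum, attained at `y`
and `y'`, then
`m * ‖y + y'‖ ≤ M (y + y') ≤ M y + M y' = m * (‖y‖ + ‖y'‖)`,
and dividing by `m < 0` forces equality in the triangle inequality, so that `y` and `y'` span the
same ray by strict convexity of the norm.
-/

/-- A positively homogeneous and subadditive real function on a real vector space. Homogeneity is
only required for positive scalars; `M 0 = 0` follows. -/
structure IsSublinear {E : Type*} [AddCommMonoid E] [Module ℝ E] (M : E → ℝ) : Prop where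
  map_smul_of_pos : ∀ ⦃c : ℝ⦄, 0 < c → ∀ x, M (c • x) = c * M x
  map_add_le : ∀ x y, M (x + y) ≤ M x + M y

namespace IsSublinear

section Module

variable {E : Type*} [AddCommMonoid E] [Module ℝ E] {M : E → ℝ}

theorem of_linearMap (l : E →ₗ[ℝ] ℝ) : IsSublinear l where
  map_smul_of_pos c _ x := l.map_smul c x
  map_add_le x y := (l.map_add x y).le

theorem finset_sup' {ι : Type*} {s : Finset ι} (hs : s.Nonempty) {f : ι → E → ℝ}
    (hf : ∀ i ∈ s, IsSublinear (f i)) : IsSublinear fun x => s.sup' hs fun i => f i x where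
  map_smul_of_pos c hc x := by
    rw [Finset.mul₀_sup' hc.le]
    exact Finset.sup'_congr hs rfl fun i hi => (hf i hi).map_smul_of_pos hc x
  map_add_le x y := Finset.sup'_le hs _ fun i hi =>
    ((hf i hi).map_add_le x y).trans <|
      add_le_add (Finset.le_sup' (f · x) hi) (Finset.le_sup' (f · y) hi)

theorem map_zero (hM : IsSublinear M) : M 0 = 0 := by
  have h : M 0 = 2 * M 0 := by simpa using hM.map_smul_of_pos two_pos 0
  linarith

theorem convexOn (hM : IsSublinear M) : ConvexOn ℝ Set.univ M :=
  convexOn_iff_forall_pos.mpr ⟨convex_univ, fun x _ y _ a b ha hb _ => by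
    simpa only [hM.map_smul_of_pos ha, hM.map_smul_of_pos hb, smul_eq_mul]
      using hM.map_add_le (a • x) (b • y)⟩

end Module

theorem continuous {E : Type*} [NormedAddCommGroup E] [NormedSpace ℝ E] [FiniteDimensional ℝ E]
    {M : E → ℝ} (hM : IsSublinear M) : Continuous M :=
  hM.convexOn.locallyLipschitz.continuous

end IsSublinear

section NormQuotient

variable {E : Type*} [NormedAddCommGroup E]

/-- The function `Λ(y) = ‖y‖⁻¹ * M y` attached to `M`. Since `0⁻¹ = 0`, the formula also gives the
conventional value `Λ(0) = 0`. -/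
noncomputable def normQuotient (M : E → ℝ) (y : E) : ℝ := ‖y‖⁻¹ * M y

@[simp]
theorem normQuotient_zero (M : E → ℝ) : normQuotient M 0 = 0 := by simp [normQuotient]

theorem ne_zero_of_normQuotient_neg {M : E → ℝ} {y : E} (hy : normQuotient M y < 0) : y ≠ 0 := by
  rintro rfl
  simp at hy

variable [NormedSpace ℝ E] {M : E → ℝ}

namespace IsSublinear

theorem normQuotient_mul_norm (hM : IsSublinear M) (y : E) : normQuotient M y * ‖y‖ = M y := by
  obtain rfl | hy := eq_or_ne y 0
  · simp [hM.map_zero]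
  · rw [normQuotient, mul_right_comm, inv_mul_cancel₀ (norm_ne_zero_iff.mpr hy), one_mul]

theorem normQuotient_eq_apply_inv_norm_smul (hM : IsSublinear M) {y : E} (hy : y ≠ 0) :
    normQuotient M y = M (‖y‖⁻¹ • y) :=
  (hM.map_smul_of_pos (inv_pos.mpr (norm_pos_iff.mpr hy)) y).symm

theorem exists_forall_normQuotient_le [FiniteDimensional ℝ E] (hM : IsSublinear M)
    (hneg : ∃ y, normQuotient M y < 0) : ∃ y₀, ∀ y, normQuotient M y₀ ≤ normQuotient M y := by
  obtain ⟨y₁, hy₁⟩ := hneg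
  have mem_sphere {y : E} (hy : y ≠ 0) : ‖y‖⁻¹ • y ∈ Metric.sphere (0 : E) 1 := by
    simpa using norm_smul_inv_norm (𝕜 := ℝ) hy
  obtain ⟨y₀, hy₀, hmin⟩ := (isCompact_sphere (0 : E) 1).exists_isMinOn
    ⟨_, mem_sphere (ne_zero_of_normQuotient_neg hy₁)⟩ hM.continuous.continuousOn
  have le_of_ne_zero {y : E} (hy : y ≠ 0) : normQuotient M y₀ ≤ normQuotient M y :=
    calc normQuotient M y₀ = M y₀ := by simp [normQuotient, mem_sphere_zero_iff_norm.mp hy₀]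
      _ ≤ M (‖y‖⁻¹ • y) := hmin (mem_sphere hy)
      _ = normQuotient M y := (hM.normQuotient_eq_apply_inv_norm_smul hy).symm
  refine ⟨y₀, fun y => ?_⟩
  obtain rfl | hy := eq_or_ne y 0
  · simpa using (le_of_ne_zero (ne_zero_of_normQuotient_neg hy₁)).trans hy₁.le
  · exact le_of_ne_zero hy

theorem sameRay_of_forall_normQuotient_le [StrictConvexSpace ℝ E] (hM : IsSublinear M) {y y' : E}
    (hneg : normQuotient M y < 0) (hy : ∀ z, normQuotient M y ≤ normQuotient M z)
    (hy' : normQuotient M y' = normQuotient M y) : SameRay ℝ y y' := by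
  have mul_norm_le : normQuotient M y * ‖y + y'‖ ≤ normQuotient M y * (‖y‖ + ‖y'‖) :=
    calc normQuotient M y * ‖y + y'‖
        ≤ normQuotient M (y + y') * ‖y + y'‖ := by gcongr; exact hy _
      _ = M (y + y') := hM.normQuotient_mul_norm _
      _ ≤ M y + M y' := hM.map_add_le y y'
      _ = normQuotient M y * (‖y‖ + ‖y'‖) := by
        rw [← hM.normQuotient_mul_norm y, ← hM.normQuotient_mul_norm y', hy', mul_add]
  have norm_add_ge : ‖y‖ + ‖y'‖ ≤ ‖y + y'‖ := (mul_le_mul_left_of_neg hneg).mp mul_norm_le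
  exact sameRay_iff_norm_add.mpr (le_antisymm (norm_add_le y y') norm_add_ge)

end IsSublinear

end NormQuotient

theorem lambda_attains_min_and_minimizers_proportional_general
    {E : Type*} [NormedAddCommGroup E] [NormedSpace ℝ E] [FiniteDimensional ℝ E]
    [StrictConvexSpace ℝ E] {M : E → ℝ} (hM : IsSublinear M)
    (hneg : ∃ y, normQuotient M y < 0) :
    (∃ y₀, ∀ y, normQuotient M y₀ ≤ normQuotient M y) ∧
      ∀ y y', (∀ z, normQuotient M y ≤ normQuotient M z) →
        (∀ z, normQuotient M y' ≤ normQuotient M z) → ∃ t : ℝ, 0 < t ∧ y' = t • y := by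
  refine ⟨hM.exists_forall_normQuotient_le hneg, fun y y' hy hy' => ?_⟩
  obtain ⟨y₁, hy₁⟩ := hneg
  have hy_neg : normQuotient M y < 0 := (hy y₁).trans_lt hy₁
  have hy'_neg : normQuotient M y' < 0 := (hy' y₁).trans_lt hy₁
  have hray : SameRay ℝ y y' :=
    hM.sameRay_of_forall_normQuotient_le hy_neg hy (le_antisymm (hy' y) (hy y'))
  obtain ⟨t, ht, hty⟩ := hray.exists_pos_left
    (ne_zero_of_normQuotient_neg hy_neg) (ne_zero_of_normQuotient_neg hy'_neg)
  exact ⟨t, ht, hty.symm⟩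

/-- **Lemma 6.4, part 1) (Totaro, Ramanan–Ramanathan).**
Let `𝒯` be a finite nonempty family of linear forms on `ℝⁿ` and
`Λ(y) = ‖y‖⁻¹ max_{l ∈ 𝒯} l(y)` for `y ≠ 0`, `Λ(0) = 0`. If `Λ` takes a strictly
negative value, then `Λ` attains its minimum, and any two minimizers are
positively proportional. -/
theorem lambda_attains_min_and_minimizers_proportional
    (n : ℕ) (hn : 1 ≤ n)
    (𝒯 : Finset (EuclideanSpace ℝ (Fin n) →ₗ[ℝ] ℝ)) (h𝒯 : 𝒯.Nonempty)
    (Λ : EuclideanSpace ℝ (Fin n) → ℝ)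
    (hΛ : ∀ y : EuclideanSpace ℝ (Fin n), y ≠ 0 →
      Λ y = ‖y‖⁻¹ * 𝒯.sup' h𝒯 (fun l => l y))
    (hΛ0 : Λ 0 = 0)
    (hneg : ∃ y, Λ y < 0) :
    (∃ y₀, ∀ y, Λ y₀ ≤ Λ y) ∧
      ∀ y y' : EuclideanSpace ℝ (Fin n),
        (∀ z, Λ y ≤ Λ z) → (∀ z, Λ y' ≤ Λ z) → ∃ t : ℝ, 0 < t ∧ y' = t • y := by
  obtain rfl : Λ = normQuotient fun y => 𝒯.sup' h𝒯 fun l => l y :=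
    funext fun y => (eq_or_ne y 0).elim (fun h => by simp [h, hΛ0]) (hΛ y)
  exact lambda_attains_min_and_minimizers_proportional_general
    (.finset_sup' h𝒯 fun l _ => .of_linearMap l) hneg
end

section
/- Let $n \geq 1$ be an integer and let $\mathscr{T}$ be a finite non-empty family of linear forms on $\mathbb{R}^n$. Define $\Lambda \colon \mathbb{R}^n \to \mathbb{R}$ by $\Lambda(y) = \|y\|^{-1} \max_{l \in \mathscr{T}} l(y)$ for $y \neq 0$ and $\Lambda(0) = 0$, where $\|\cdot\|$ is the Euclidean norm. Suppose that $\Lambda$ takes at least one strictly negative value, let $c$ be the minimum value of $\Lambda$ and let $y_0 \in \mathbb{R}^n$ be a point at which $\Lambda$ attains this minimum. Then for every $y \in \mathbb{R}^n$ with $y \neq 0$, one has $\Lambda(y) \geq c\, \dfrac{\langle y_0, y \rangle}{\|y_0\| \cdot \|y\|}$, where $\langle \cdot, \cdot \rangle$ is the standard Euclidean inner product. -/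
/-!
If a differentiable function `g` touches a convex function `f` from below at `x`, then its
derivative there is a subgradient of `f`: this is first-order optimality of `(z, r) ↦ r - g z` on
the convex epigraph of `f`. A minimizer `y₀` of `Λ`, with value `c`, is a point where
`c * ‖·‖` touches the convex function `max l` from below, and the derivative of `c * ‖·‖` at `y₀`
is `c * ⟪y₀, ·⟫ / ‖y₀‖`, whose value at `y₀` is `c * ‖y₀‖ = max l(y₀)`.
-/

open Set Filter Topology

theorem convexOn_finset_sup' {𝕜 E β ι : Type*} [Semiring 𝕜] [PartialOrder 𝕜]
    [AddCommMonoid E] [SMul 𝕜 E]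
    [AddCommMonoid β] [LinearOrder β] [IsOrderedAddMonoid β] [Module 𝕜 β] [PosSMulStrictMono 𝕜 β]
    {s : Set E} {t : Finset ι} (ht : t.Nonempty) {f : ι → E → β}
    (hf : ∀ i ∈ t, ConvexOn 𝕜 s (f i)) :
    ConvexOn 𝕜 s (fun x => t.sup' ht (fun i => f i x)) := by
  simpa only [← Finset.sup'_apply] using
    Finset.sup'_induction ht f (p := ConvexOn 𝕜 s) (fun _ h₁ _ h₂ => h₁.sup h₂) hf

theorem isLocalMinOn_sub_const_mul_of_div {α 𝕜 : Type*} [TopologicalSpace α]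
    [Field 𝕜] [LinearOrder 𝕜] [IsStrictOrderedRing 𝕜] [TopologicalSpace 𝕜] [ClosedIicTopology 𝕜]
    {f g : α → 𝕜} {s : Set α} {x : α} (h : IsLocalMinOn (fun z => f z / g z) s x)
    (hg : ContinuousWithinAt g s x) (hgx : 0 < g x) :
    IsLocalMinOn (fun z => f z - f x / g x * g z) s x := by
  filter_upwards [h, hg.eventually_const_lt hgx] with z hz hgz
  rw [div_mul_cancel₀ _ hgx.ne', sub_self, sub_nonneg]
  exact (le_div_iff₀ hgz).mp hz

theorem apply_sub_le_of_isLocalMinOn_sub {E : Type*} [NormedAddCommGroup E] [NormedSpace ℝ E]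
    {s : Set E} {f g : E → ℝ} {g' : E →L[ℝ] ℝ} {x y : E} (hf : ConvexOn ℝ s f)
    (hg : HasFDerivWithinAt g g' s x) (hmin : IsLocalMinOn (fun z => f z - g z) s x)
    (hx : x ∈ s) (hy : y ∈ s) : g' (y - x) ≤ f y - f x := by
  let epi : Set (E × ℝ) := {q | q.1 ∈ s ∧ f q.1 ≤ q.2}
  have fst_mapsTo : MapsTo Prod.fst epi s := fun _ hq => hq.1
  have hmin_epi : IsLocalMinOn (fun q : E × ℝ => q.2 - g q.1) epi (x, f x) := by
    have fst_tendsto : Tendsto Prod.fst (𝓝[epi] (x, f x)) (𝓝[s] x) :=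
      continuousWithinAt_fst.tendsto_nhdsWithin fst_mapsTo
    filter_upwards [fst_tendsto.eventually hmin, self_mem_nhdsWithin] with q hq hq_epi
    exact hq.trans (sub_le_sub_right hq_epi.2 _)
  have hderiv : HasFDerivWithinAt (fun q : E × ℝ => q.2 - g q.1)
      (.snd ℝ E ℝ - g' ∘L .fst ℝ E ℝ) epi (x, f x) :=
    hasFDerivWithinAt_snd.sub (hg.comp (x, f x) hasFDerivWithinAt_fst fst_mapsTo)
  have hdir : (y, f y) - (x, f x) ∈ posTangentConeAt epi (x, f x) :=
    sub_mem_posTangentConeAt_of_segment_subset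
      (hf.convex_epigraph.segment_subset ⟨hx, le_rfl⟩ ⟨hy, le_rfl⟩)
  exact sub_nonneg.mp (hmin_epi.hasFDerivWithinAt_nonneg hderiv hdir)

section InnerProductSpace

variable {E : Type*} [NormedAddCommGroup E] [InnerProductSpace ℝ E]

theorem hasFDerivAt_norm_of_ne_zero {x : E} (hx : x ≠ 0) :
    HasFDerivAt (fun z : E => ‖z‖) (‖x‖⁻¹ • innerSL ℝ x) x := by
  have hsqrt := (hasStrictFDerivAt_norm_sq x).hasFDerivAt.sqrt (by simpa using hx)
  simp only [Real.sqrt_sq (norm_nonneg _)] at hsqrt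
  convert hsqrt using 1
  rw [← Nat.cast_smul_eq_nsmul ℝ, smul_smul]
  congr 1
  field_simp
  norm_num

theorem lambda_ge_of_min_general {s : Set E} {f : E → ℝ} {y₀ y : E} (hf : ConvexOn ℝ s f)
    (hmin : IsLocalMinOn (fun z => ‖z‖⁻¹ * f z) s y₀) (hy₀s : y₀ ∈ s) (hys : y ∈ s)
    (hy₀ : y₀ ≠ 0) (hy : y ≠ 0) :
    ‖y₀‖⁻¹ * f y₀ * (inner ℝ y₀ y / (‖y₀‖ * ‖y‖)) ≤ ‖y‖⁻¹ * f y := by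
  simp only [inv_mul_eq_div] at hmin ⊢
  have hnorm : 0 < ‖y₀‖ := norm_pos_iff.mpr hy₀
  have htouch : IsLocalMinOn (fun z => f z - f y₀ / ‖y₀‖ * ‖z‖) s y₀ :=
    isLocalMinOn_sub_const_mul_of_div hmin continuous_norm.continuousWithinAt hnorm
  have hsubgrad : f y₀ / ‖y₀‖ * (‖y₀‖⁻¹ * inner ℝ y₀ (y - y₀)) ≤ f y - f y₀ :=
    apply_sub_le_of_isLocalMinOn_sub hf
      ((hasFDerivAt_norm_of_ne_zero hy₀).const_mul _).hasFDerivWithinAt htouch hy₀s hys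
  have hlower : f y₀ / ‖y₀‖ * (inner ℝ y₀ y / ‖y₀‖) ≤ f y := by
    rw [inner_sub_right, real_inner_self_eq_norm_sq] at hsubgrad
    field_simp at hsubgrad ⊢
    linarith
  calc f y₀ / ‖y₀‖ * (inner ℝ y₀ y / (‖y₀‖ * ‖y‖))
      = f y₀ / ‖y₀‖ * (inner ℝ y₀ y / ‖y₀‖) / ‖y‖ := by rw [← div_div, mul_div_assoc]
    _ ≤ f y / ‖y‖ := (div_le_div_iff_of_pos_right (norm_pos_iff.mpr hy)).mpr hlower

end InnerProductSpace

/-- **Lemma 6.4, part 2) (Totaro, Ramanan–Ramanathan).**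
With `Λ(y) = ‖y‖⁻¹ max_{l ∈ 𝒯} l(y)` for `y ≠ 0`, `Λ(0) = 0`, taking a strictly
negative value, if `c` is the minimum value of `Λ`, attained at `y₀`, then for
every `y ≠ 0` one has `Λ(y) ≥ c ⟨y₀, y⟩ / (‖y₀‖ ‖y‖)`. -/
theorem lambda_ge_of_min
    (n : ℕ) (hn : 1 ≤ n)
    (𝒯 : Finset (EuclideanSpace ℝ (Fin n) →ₗ[ℝ] ℝ)) (h𝒯 : 𝒯.Nonempty)
    (Λ : EuclideanSpace ℝ (Fin n) → ℝ)
    (hΛ : ∀ y : EuclideanSpace ℝ (Fin n), y ≠ 0 →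
      Λ y = ‖y‖⁻¹ * 𝒯.sup' h𝒯 (fun l => l y))
    (hΛ0 : Λ 0 = 0)
    (hneg : ∃ y, Λ y < 0)
    (c : ℝ) (y₀ : EuclideanSpace ℝ (Fin n))
    (hmin : ∀ y, c ≤ Λ y) (hy₀ : Λ y₀ = c) :
    ∀ y : EuclideanSpace ℝ (Fin n), y ≠ 0 →
      c * ((inner ℝ y₀ y : ℝ) / (‖y₀‖ * ‖y‖)) ≤ Λ y := by
  intro y hy
  have hΛ_eq : Λ = fun z => ‖z‖⁻¹ * 𝒯.sup' h𝒯 (fun l => l z) := by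
    funext z
    rcases eq_or_ne z 0 with rfl | hz
    · simp [hΛ0]
    · exact hΛ z hz
  have hy₀_ne : y₀ ≠ 0 := by
    rintro rfl
    obtain ⟨z, hz⟩ := hneg
    exact ((hmin z).trans_lt hz).ne (hy₀.symm.trans hΛ0)
  have hconv : ConvexOn ℝ univ (fun z => 𝒯.sup' h𝒯 (fun l => l z)) :=
    convexOn_finset_sup' h𝒯 fun l _ => l.convexOn convex_univ
  subst hy₀ hΛ_eq
  exact lambda_ge_of_min_general hconv (.of_forall hmin) (mem_univ _) (mem_univ _) hy₀_ne hy
end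

section
/- Let $n \geq 1$ be an integer and let $\mathscr{T}$ be a finite non-empty family of linear forms on $\mathbb{R}^n$ all of whose coefficients are rational, i.e. each $l \in \mathscr{T}$ satisfies $l(e_i) \in \mathbb{Q}$ for every standard basis vector $e_i$. Define $\Lambda \colon \mathbb{R}^n \to \mathbb{R}$ by $\Lambda(y) = \|y\|^{-1} \max_{l \in \mathscr{T}} l(y)$ for $y \neq 0$ and $\Lambda(0) = 0$, where $\|\cdot\|$ is the Euclidean norm. Suppose that $\Lambda$ takes at least one strictly negative value. Then there exists a point $y_0 \in \mathbb{Z}^n$ (all coordinates integers) at which $\Lambda$ attains its minimum value over $\mathbb{R}^n$. -/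
/-!
Represent each form `l` by its Riesz vector, and let `p` be the point of smallest norm in the convex
hull of these vectors. Then `max_l l(y) ≥ ⟪p, y⟫ ≥ -‖p‖ ‖y‖` for all `y`, with equality along the
ray through `-p`, so `Λ` has minimum `-‖p‖`, attained on that ray; a negative value of `Λ` forces
`p ≠ 0`. The point `p` lies in the hull of the face of vectors `x` with `⟪p, x⟫ = ‖p‖²`, hence
`p / ‖p‖²` lies in the span of the face and has inner product `1` with each of its vectors. These
inner products determine a vector of the span, so `p / ‖p‖²` is given by a linear system with
rational coefficients. The ray through `-p` therefore contains a rational point, and clearing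
denominators gives an integer one.
-/

open Module Submodule
open scoped RealInnerProductSpace

section Convexity

theorem mem_convexHull_face {𝕜 V : Type*} [Field 𝕜] [LinearOrder 𝕜] [IsStrictOrderedRing 𝕜]
    [AddCommGroup V] [Module 𝕜 V] {s : Set V} {p : V} (f : V →ₗ[𝕜] 𝕜) (hp : p ∈ convexHull 𝕜 s)
    (hmin : ∀ x ∈ s, f p ≤ f x) : p ∈ convexHull 𝕜 {x ∈ s | f x = f p} := by
  obtain ⟨ι, _, w, z, hw₀, hw₁, hz, hwz⟩ := mem_convexHull_iff_exists_fintype.1 hp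
  have hsum : ∑ i, w i * (f (z i) - f p) = 0 := by
    have hfp : ∑ i, w i * f (z i) = f p := by simp [← hwz]
    simp only [mul_sub, Finset.sum_sub_distrib, ← Finset.sum_mul, hw₁, one_mul, hfp, sub_self]
  have hface (i : ι) (hi : w i ≠ 0) : f (z i) = f p := by
    have hterm := (Finset.sum_eq_zero_iff_of_nonneg fun i _ ↦
      mul_nonneg (hw₀ i) (sub_nonneg.2 (hmin _ (hz i)))).1 hsum i (Finset.mem_univ i)
    exact sub_eq_zero.1 ((mul_eq_zero.1 hterm).resolve_left hi)
  rw [← finsum_eq_sum_of_fintype] at hw₁ hwz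
  have hmem := (convex_convexHull 𝕜 {x ∈ s | f x = f p}).finsum_mem hw₀ hw₁
    fun i hi ↦ subset_convexHull 𝕜 _ ⟨hz i, hface i hi⟩
  rwa [hwz] at hmem

variable {E : Type*} [NormedAddCommGroup E] [InnerProductSpace ℝ E]

theorem exists_mem_norm_sq_le_inner {C : Set E} (hne : C.Nonempty) (hcomplete : IsComplete C)
    (hconvex : Convex ℝ C) : ∃ p ∈ C, ∀ x ∈ C, ‖p‖ ^ 2 ≤ ⟪p, x⟫ := by
  obtain ⟨p, hp, hnorm⟩ := exists_norm_eq_iInf_of_complete_convex hne hcomplete hconvex 0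
  refine ⟨p, hp, fun x hx ↦ ?_⟩
  have hobtuse := (norm_eq_iInf_iff_real_inner_le_zero hconvex hp).1 hnorm x hx
  rw [zero_sub, inner_neg_left, inner_sub_right, real_inner_self_eq_norm_sq] at hobtuse
  linarith

theorem exists_inner_ge_neg_norm_mul_norm {s : Set E} {p : E} (hp : p ∈ convexHull ℝ s) (y : E) :
    ∃ x ∈ s, -(‖p‖ * ‖y‖) ≤ ⟪x, y⟫ := by
  obtain ⟨x, hx, hpx⟩ := ((innerₗ E).flip y).convexOn convex_univ |>.exists_ge_of_mem_convexHull
    (Set.subset_univ s) hp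
  exact ⟨x, hx, (neg_le_of_abs_le (abs_real_inner_le_norm p y)).trans hpx⟩

end Convexity

theorem exists_forall_eq_inner {E : Type*} [NormedAddCommGroup E] [InnerProductSpace ℝ E]
    [FiniteDimensional ℝ E] (l : E →ₗ[ℝ] ℝ) : ∃ v : E, ∀ y, l y = ⟪v, y⟫ :=
  have := FiniteDimensional.complete ℝ E
  ⟨(InnerProductSpace.toDual ℝ E).symm l.toContinuousLinearMap, fun y ↦ by simp⟩

section Rationality

variable {E : Type*} [NormedAddCommGroup E] [InnerProductSpace ℝ E] {K : Subfield ℝ} {s : Set E}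

theorem inner_mem_subfield_of_mem_span {x y : E} (hy : y ∈ span K s) (hx : ∀ z ∈ s, ⟪x, z⟫ ∈ K) :
    ⟪x, y⟫ ∈ K := by
  induction hy using span_induction with
  | mem z hz => exact hx z hz
  | zero => simp
  | add y z _ _ hy hz => simpa only [inner_add_right] using K.add_mem hy hz
  | smul c y _ hy =>
    simpa only [Subfield.smul_def, real_inner_smul_right] using K.mul_mem c.2 hy

theorem eq_of_mem_span_of_inner_eq {x x' : E} (hx : x ∈ span ℝ s) (hx' : x' ∈ span ℝ s)
    (h : ∀ z ∈ s, ⟪x, z⟫ = ⟪x', z⟫) : x = x' := by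
  have hle : span ℝ s ≤ LinearMap.ker (innerₗ E (x - x')) :=
    span_le.2 fun z hz ↦ by simp [h z hz]
  exact sub_eq_zero.1 (inner_self_eq_zero.1 (hle (sub_mem hx hx')))

theorem mem_span_subfield_of_inner_mem {x : E} (hs : ∀ y ∈ s, ∀ z ∈ s, ⟪y, z⟫ ∈ K)
    (hx : x ∈ span ℝ s) (hxs : ∀ z ∈ s, ⟪x, z⟫ ∈ K) : x ∈ span K s := by
  -- A `K`-linear retraction `φ` of `ℝ` onto `K`, applied to the coefficients of `x`, preserves the
  -- inner products of `x` with `s`, and so does not change `x`.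
  obtain ⟨φ, hφ⟩ := (Algebra.linearMap K ℝ).exists_leftInverse_of_injective
    (LinearMap.ker_eq_bot.2 (algebraMap K ℝ).injective)
  replace hφ (k : K) : φ k = k := LinearMap.congr_fun hφ k
  obtain ⟨n, c, g, rfl⟩ := mem_span_set'.1 hx
  have hmem : ∑ i, φ (c i) • (g i : E) ∈ span K s :=
    sum_mem fun i _ ↦ smul_mem _ _ (subset_span (g i).2)
  suffices h : ∑ i, c i • (g i : E) = ∑ i, φ (c i) • (g i : E) from h ▸ hmem
  refine eq_of_mem_span_of_inner_eq hx (span_le_restrictScalars K ℝ s hmem) fun z hz ↦ ?_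
  have hφ_mul (i : Fin n) : φ (c i * ⟪(g i : E), z⟫) = φ (c i) * ⟪(g i : E), z⟫ := by
    let k : K := ⟨⟪(g i : E), z⟫, hs _ (g i).2 z hz⟩
    calc (φ (c i * k) : ℝ) = φ (k • c i) := by rw [mul_comm, Subfield.smul_def, smul_eq_mul]
      _ = φ (c i) * k := by rw [map_smul, smul_eq_mul, mul_comm, Subfield.coe_mul]
  calc ⟪∑ i, c i • (g i : E), z⟫
      = φ ⟪∑ i, c i • (g i : E), z⟫ := congrArg Subtype.val (hφ ⟨_, hxs z hz⟩).symm
    _ = ⟪∑ i, φ (c i) • (g i : E), z⟫ := by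
      simp [sum_inner, real_inner_smul_left, Subfield.smul_def, hφ_mul]

theorem inv_norm_sq_smul_mem_span_subfield {p : E} (hs : ∀ y ∈ s, ∀ z ∈ s, ⟪y, z⟫ ∈ K)
    (hp : p ∈ convexHull ℝ s) (hmin : ∀ x ∈ s, ‖p‖ ^ 2 ≤ ⟪p, x⟫) (hp₀ : p ≠ 0) :
    (‖p‖ ^ 2)⁻¹ • p ∈ span K s := by
  set F := {x ∈ s | ⟪p, x⟫ = ⟪p, p⟫}
  have hFs : F ⊆ s := Set.sep_subset _ _
  have hpF : p ∈ convexHull ℝ F :=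
    mem_convexHull_face (innerₗ E p) hp (by simpa using hmin)
  have hF : (‖p‖ ^ 2)⁻¹ • p ∈ span K F := by
    refine mem_span_subfield_of_inner_mem (fun y hy z hz ↦ hs y (hFs hy) z (hFs hz))
      (smul_mem _ _ (convexHull_min subset_span (span ℝ F).convex hpF)) fun z hz ↦ ?_
    rw [real_inner_smul_left, hz.2, real_inner_self_eq_norm_sq, inv_mul_cancel₀ (by simpa)]
    exact K.one_mem
  exact span_mono hFs hF

/-- The number `-r` is the minimum over `y ≠ 0` of `max_{x ∈ s} ⟪x, y⟫ / ‖y‖`, and it is attained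
at `y₀`; clearing the denominator avoids an exception at `y = 0`. -/
theorem exists_mem_span_subfield_inner_minimax (hfin : s.Finite) (hne : s.Nonempty)
    (hs : ∀ y ∈ s, ∀ z ∈ s, ⟪y, z⟫ ∈ K) (hneg : ∃ y, ∀ x ∈ s, ⟪x, y⟫ < 0) :
    ∃ r > 0, ∃ y₀ ∈ span K s, y₀ ≠ 0 ∧ (∀ x ∈ s, ⟪x, y₀⟫ ≤ -(r * ‖y₀‖)) ∧
      ∀ y, ∃ x ∈ s, -(r * ‖y‖) ≤ ⟪x, y⟫ := by
  obtain ⟨p, hp, hmin⟩ := exists_mem_norm_sq_le_inner (hne.convexHull (𝕜 := ℝ))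
    (hfin.isCompact_convexHull ℝ).isComplete (convex_convexHull ℝ s)
  have hp₀ : p ≠ 0 := by
    rintro rfl
    obtain ⟨y, hy⟩ := hneg
    obtain ⟨x, hx, hxy⟩ := exists_inner_ge_neg_norm_mul_norm hp y
    simp only [norm_zero, zero_mul, neg_zero] at hxy
    exact (hy x hx).not_ge hxy
  have hmin_s : ∀ x ∈ s, ‖p‖ ^ 2 ≤ ⟪p, x⟫ := fun x hx ↦ hmin x (subset_convexHull ℝ s hx)
  have hnorm : 0 < ‖p‖ := norm_pos_iff.2 hp₀
  refine ⟨‖p‖, hnorm, -((‖p‖ ^ 2)⁻¹ • p),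
    neg_mem (inv_norm_sq_smul_mem_span_subfield hs hp hmin_s hp₀), by simpa using hp₀,
    fun x hx ↦ ?_, exists_inner_ge_neg_norm_mul_norm hp⟩
  rw [inner_neg_right, real_inner_smul_right, real_inner_comm, norm_neg,
    norm_smul_of_nonneg (by positivity), neg_le_neg_iff]
  calc ‖p‖ * ((‖p‖ ^ 2)⁻¹ * ‖p‖) = (‖p‖ ^ 2)⁻¹ * ‖p‖ ^ 2 := by ring
    _ ≤ (‖p‖ ^ 2)⁻¹ * ⟪p, x⟫ := by gcongr; exact hmin_s x hx

theorem exists_mem_span_subfield_minimax {ι : Type*} [Finite ι] (b : Basis ι ℝ E)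
    (hb : ∀ i j, ⟪b i, b j⟫ ∈ K) {𝒯 : Set (E →ₗ[ℝ] ℝ)} (hfin : 𝒯.Finite) (hne : 𝒯.Nonempty)
    (h𝒯 : ∀ l ∈ 𝒯, ∀ i, l (b i) ∈ K) (hneg : ∃ y, ∀ l ∈ 𝒯, l y < 0) :
    ∃ r > 0, ∃ y₀ ∈ span K (Set.range b), y₀ ≠ 0 ∧ (∀ l ∈ 𝒯, l y₀ ≤ -(r * ‖y₀‖)) ∧
      ∀ y, ∃ l ∈ 𝒯, -(r * ‖y‖) ≤ l y := by
  have := b.finiteDimensional_of_finite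
  choose v hv using exists_forall_eq_inner (E := E)
  have hvb : ∀ l ∈ 𝒯, ∀ z ∈ Set.range b, ⟪v l, z⟫ ∈ K := by
    rintro l hl _ ⟨i, rfl⟩
    exact hv l (b i) ▸ h𝒯 l hl i
  have hspan : ∀ l ∈ 𝒯, v l ∈ span K (Set.range b) := fun l hl ↦
    mem_span_subfield_of_inner_mem (by simpa using hb) (b.mem_span _) (hvb l hl)
  have hgram : ∀ x ∈ v '' 𝒯, ∀ y ∈ v '' 𝒯, ⟪x, y⟫ ∈ K := by
    rintro _ ⟨l, hl, rfl⟩ _ ⟨m, hm, rfl⟩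
    exact inner_mem_subfield_of_mem_span (hspan m hm) (hvb l hl)
  obtain ⟨r, hr, y₀, hy₀, hminimax⟩ := exists_mem_span_subfield_inner_minimax (hfin.image v)
    (hne.image v) hgram (by simpa [← hv] using hneg)
  refine ⟨r, hr, y₀, ?_, by simpa [← hv] using hminimax⟩
  exact span_le.2 (Set.image_subset_iff.2 hspan) hy₀

end Rationality

theorem exists_natCast_smul_mem_span_int {k V : Type*} [Field k] [CharZero k] [AddCommGroup V]
    [Module k V] {s : Set V} {x : V} (hx : x ∈ span (algebraMap ℚ k).fieldRange s) :
    ∃ N : ℕ, 0 < N ∧ (N : k) • x ∈ span ℤ s := by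
  induction hx using span_induction with
  | mem x hx => exact ⟨1, one_pos, by simpa using subset_span hx⟩
  | zero => exact ⟨1, one_pos, by simp⟩
  | add x y _ _ hx hy =>
    obtain ⟨M, hM, hMx⟩ := hx
    obtain ⟨N, hN, hNy⟩ := hy
    refine ⟨M * N, mul_pos hM hN, ?_⟩
    have hsmul : ((M * N : ℕ) : k) • (x + y) = N • (M : k) • x + M • (N : k) • y := by
      push_cast
      module
    exact hsmul ▸ add_mem (nsmul_mem hMx N) (nsmul_mem hNy M)
  | smul c x _ hx =>
    obtain ⟨N, hN, hNx⟩ := hx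
    obtain ⟨_, q, rfl⟩ := c
    refine ⟨q.den * N, mul_pos q.den_pos hN, ?_⟩
    have hden : (q.den : k) * (q : k) = q.num := by
      exact_mod_cast Rat.den_mul_eq_num q
    have hclear : ((q.den * N : ℕ) : k) • (q : k) • x = q.num • (N : k) • x := by
      rw [← Int.cast_smul_eq_zsmul k, ← hden]
      push_cast
      module
    simpa only [Subfield.smul_def, eq_ratCast, hclear] using zsmul_mem hNx q.num

theorem lambda_min_attained_at_integer_point_general {ι E : Type*} [Finite ι]
    [NormedAddCommGroup E] [InnerProductSpace ℝ E] (b : Basis ι ℝ E)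
    (hb : ∀ i j, ∃ q : ℚ, ⟪b i, b j⟫ = (q : ℝ))
    (𝒯 : Finset (E →ₗ[ℝ] ℝ)) (h𝒯 : 𝒯.Nonempty)
    (hrat : ∀ l ∈ 𝒯, ∀ i, ∃ q : ℚ, l (b i) = (q : ℝ))
    (Λ : E → ℝ) (hΛ : ∀ y, y ≠ 0 → Λ y = ‖y‖⁻¹ * 𝒯.sup' h𝒯 (fun l ↦ l y))
    (hΛ0 : Λ 0 = 0) (hneg : ∃ y, Λ y < 0) :
    ∃ y₀ ∈ span ℤ (Set.range b), ∀ y, Λ y₀ ≤ Λ y := by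
  have hneg_forms : ∃ y, ∀ l ∈ 𝒯, l y < 0 := by
    obtain ⟨y, hy⟩ := hneg
    have hy₀ : y ≠ 0 := by rintro rfl; exact hy.ne hΛ0
    rw [hΛ y hy₀, inv_mul_lt_iff₀ (norm_pos_iff.2 hy₀), mul_zero] at hy
    exact ⟨y, (Finset.sup'_lt_iff h𝒯).1 hy⟩
  obtain ⟨r, hr, y₀, hy₀_span, hy₀, hupper, hlower⟩ :=
    exists_mem_span_subfield_minimax (K := (algebraMap ℚ ℝ).fieldRange) b
      (by simpa [eq_comm] using hb) 𝒯.finite_toSet h𝒯 (by simpa [eq_comm] using hrat) hneg_forms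
  obtain ⟨N, hN, hNy₀⟩ := exists_natCast_smul_mem_span_int hy₀_span
  have hN_ne : (N : ℝ) • y₀ ≠ 0 := smul_ne_zero (Nat.cast_ne_zero.2 hN.ne') hy₀
  have hΛN : Λ ((N : ℝ) • y₀) ≤ -r := by
    rw [hΛ _ hN_ne, inv_mul_le_iff₀ (norm_pos_iff.2 hN_ne), Finset.sup'_le_iff]
    intro l hl
    calc l ((N : ℝ) • y₀) = N * l y₀ := by simp
      _ ≤ N * -(r * ‖y₀‖) := by gcongr; exact hupper l hl
      _ = ‖(N : ℝ) • y₀‖ * -r := by rw [norm_smul_of_nonneg N.cast_nonneg]; ring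
  refine ⟨(N : ℝ) • y₀, hNy₀, fun y ↦ hΛN.trans ?_⟩
  rcases eq_or_ne y 0 with rfl | hy
  · exact hΛ0 ▸ neg_nonpos.2 hr.le
  · obtain ⟨l, hl, hly⟩ := hlower y
    rw [hΛ y hy, le_inv_mul_iff₀ (norm_pos_iff.2 hy), mul_neg, mul_comm]
    exact hly.trans (Finset.le_sup' (fun l ↦ l y) hl)

/-- **Lemma 6.4, part 3) (Totaro, Ramanan–Ramanathan).**
If all the linear forms in `𝒯` have rational coefficients and `Λ` takes a
strictly negative value, then there is a point with integer coordinates which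
minimizes `Λ` over `ℝⁿ`. -/
theorem lambda_min_attained_at_integer_point
    (n : ℕ) (hn : 1 ≤ n)
    (𝒯 : Finset (EuclideanSpace ℝ (Fin n) →ₗ[ℝ] ℝ)) (h𝒯 : 𝒯.Nonempty)
    (hrat : ∀ l ∈ 𝒯, ∀ i : Fin n, ∃ q : ℚ, l (EuclideanSpace.single i (1 : ℝ)) = (q : ℝ))
    (Λ : EuclideanSpace ℝ (Fin n) → ℝ)
    (hΛ : ∀ y : EuclideanSpace ℝ (Fin n), y ≠ 0 →
      Λ y = ‖y‖⁻¹ * 𝒯.sup' h𝒯 (fun l => l y))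
    (hΛ0 : Λ 0 = 0)
    (hneg : ∃ y, Λ y < 0) :
    ∃ y₀ : EuclideanSpace ℝ (Fin n),
      (∀ i : Fin n, ∃ m : ℤ, y₀ i = (m : ℝ)) ∧ ∀ y, Λ y₀ ≤ Λ y := by
  let e := EuclideanSpace.basisFun (Fin n) ℝ
  obtain ⟨y₀, hy₀, hmin⟩ := lambda_min_attained_at_integer_point_general e.toBasis
    (fun i j ↦ ⟨if i = j then 1 else 0, by simp [e.inner_eq_ite, apply_ite (Rat.cast (K := ℝ))]⟩)
    𝒯 h𝒯 (by simpa [e] using hrat) Λ hΛ hΛ0 hneg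
  exact ⟨y₀, fun i ↦ by simpa [e, eq_comm] using (e.toBasis.mem_span_iff_repr_mem ℤ y₀).1 hy₀ i,
    hmin⟩
end

section
/- Let $K$ be a field, $V$ a nonzero finite-dimensional $K$-vector space of dimension $r$, $\mathbf{e} = (e_1, \ldots, e_r)$ a basis of $V$, and $Z$ a non-empty subset of $\mathbb{R}$. Then the map $\Phi_{\mathbf{e}}$ sending an $\mathbb{R}$-filtration $\mathcal{F}$ to the tuple $(\lambda_{\mathcal{F}}(e_1), \ldots, \lambda_{\mathcal{F}}(e_r))$ is a bijection from the set of $\mathbb{R}$-filtrations of $V$ that are compatible with $\mathbf{e}$ and supported by $Z$ onto $Z^r$. In other words: two $\mathbb{R}$-filtrations compatible with $\mathbf{e}$ and supported by $Z$ that assign the same values $\lambda_{\mathcal{F}}(e_i)$ to all basis vectors are equal, and for every tuple $(z_1, \ldots, z_r) \in Z^r$ there exists an $\mathbb{R}$-filtration of $V$ compatible with $\mathbf{e}$, supported by $Z$, with $\lambda_{\mathcal{F}}(e_i) = z_i$ for all $i$. -/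
/-- An `ℝ`-filtration of a `K`-vector space `V`: a decreasing, left-continuous family of
subspaces which is `0` for sufficiently large indices and `V` for sufficiently small ones. -/
structure RFiltration (K V : Type*) [Field K] [AddCommGroup V] [Module K V] where
  /-- the family of subspaces -/
  F : ℝ → Submodule K V
  antitone : Antitone F
  eventually_bot : ∃ a : ℝ, ∀ b : ℝ, a ≤ b → F b = ⊥
  eventually_top : ∃ a : ℝ, ∀ b : ℝ, b ≤ a → F b = ⊤
  left_continuous : ∀ a : ℝ, F a = ⨅ b : {b : ℝ // b < a}, F (b : ℝ)

namespace RFiltration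

variable {K V : Type*} [Field K] [AddCommGroup V] [Module K V]

/-- `λ_𝓕(x) = sup { a | x ∈ 𝓕_a V }` (a real number; meaningful for `x ≠ 0`). -/
noncomputable def lambda (𝓕 : RFiltration K V) (x : V) : ℝ :=
  sSup {a : ℝ | x ∈ 𝓕.F a}

/-- A family of vectors `e` is compatible with the filtration `𝓕` if each subspace `𝓕_a V`
is spanned by the vectors of the family it contains. -/
def Compatible {ι : Type*} (𝓕 : RFiltration K V) (e : ι → V) : Prop :=
  ∀ a : ℝ, 𝓕.F a = Submodule.span K (Set.range e ∩ (𝓕.F a : Set V))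

/-- The filtration `𝓕` is supported by `Z ⊆ ℝ` if all its jump values lie in `Z`,
i.e. `λ_𝓕(x) ∈ Z` for every nonzero `x`. -/
def SupportedBy (𝓕 : RFiltration K V) (Z : Set ℝ) : Prop :=
  ∀ x : V, x ≠ 0 → 𝓕.lambda x ∈ Z

end RFiltration

/-!
By left continuity the supremum defining `λ_𝓕(x)` is attained, so `x ∈ 𝓕_a V ↔ a ≤ λ_𝓕(x)` for
`x ≠ 0`. A filtration compatible with a family `e` is spanned at each index by members of `e`, so
the numbers `λ_𝓕(e i)` determine it. Conversely, given a basis `e` and bounded reals `z i`, the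
subspaces `span {e i | a ≤ z i}` form a filtration for which `λ(x)` is the least `z i` over the
support of `x`; in particular every jump value is one of the `z i`. Boundedness of the values is
exactly what the vanishing and exhaustion conditions require, and it is automatic for finite bases.
-/

namespace RFiltration

open Module Set Submodule

variable {K V ι : Type*} [Field K] [AddCommGroup V] [Module K V]

section Lambda

variable (𝓕 : RFiltration K V) {𝓖 : RFiltration K V} {x : V}

theorem F_injective : Function.Injective (F : RFiltration K V → ℝ → Submodule K V) := by
  rintro ⟨_, _, _, _, _⟩ ⟨_, _, _, _, _⟩ rfl
  rfl

theorem bddAbove_setOf_mem_F (hx : x ≠ 0) : BddAbove {a | x ∈ 𝓕.F a} := by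
  obtain ⟨t, ht⟩ := 𝓕.eventually_bot
  refine ⟨t, fun a (ha : x ∈ 𝓕.F a) ↦ le_of_not_gt fun hta ↦ hx ?_⟩
  rwa [ht a hta.le, mem_bot] at ha

theorem nonempty_setOf_mem_F (x : V) : {a | x ∈ 𝓕.F a}.Nonempty := by
  obtain ⟨s, hs⟩ := 𝓕.eventually_top
  exact ⟨s, (hs s le_rfl).ge mem_top⟩

theorem mem_F_iff_le_lambda (hx : x ≠ 0) {a : ℝ} : x ∈ 𝓕.F a ↔ a ≤ 𝓕.lambda x := by
  refine ⟨fun ha ↦ le_csSup (𝓕.bddAbove_setOf_mem_F hx) ha, fun ha ↦ ?_⟩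
  rw [𝓕.left_continuous a, mem_iInf]
  rintro ⟨b, hba⟩
  obtain ⟨c, hc, hbc⟩ := exists_lt_of_lt_csSup (𝓕.nonempty_setOf_mem_F x) (hba.trans_le ha)
  exact 𝓕.antitone hbc.le hc

variable {𝓕}

theorem lambda_eq_of_forall_mem_F_iff {c : ℝ} (h : ∀ a, x ∈ 𝓕.F a ↔ a ≤ c) : 𝓕.lambda x = c := by
  have h_Iic : {a | x ∈ 𝓕.F a} = Iic c := Set.ext h
  rw [lambda, h_Iic, csSup_Iic]

theorem mem_F_iff_of_lambda_eq (h : 𝓕.lambda x = 𝓖.lambda x) {a : ℝ} :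
    x ∈ 𝓕.F a ↔ x ∈ 𝓖.F a := by
  rcases eq_or_ne x 0 with rfl | hx
  · simp only [Submodule.zero_mem]
  · rw [𝓕.mem_F_iff_le_lambda hx, 𝓖.mem_F_iff_le_lambda hx, h]

variable (𝓕)

theorem bddAbove_lambda_image_compl_zero : BddAbove (𝓕.lambda '' {0}ᶜ) := by
  obtain ⟨t, ht⟩ := 𝓕.eventually_bot
  refine ⟨t, forall_mem_image.2 fun x (hx : x ≠ 0) ↦ le_of_not_ge fun htx ↦ hx ?_⟩
  rwa [← 𝓕.mem_F_iff_le_lambda hx, ht t le_rfl, mem_bot] at htx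

theorem bddBelow_lambda_image_compl_zero : BddBelow (𝓕.lambda '' {0}ᶜ) := by
  obtain ⟨s, hs⟩ := 𝓕.eventually_top
  refine ⟨s, forall_mem_image.2 fun x (hx : x ≠ 0) ↦ (𝓕.mem_F_iff_le_lambda hx).1 ?_⟩
  exact (hs s le_rfl).ge mem_top

end Lambda

theorem Compatible.eq_of_lambda_eq {𝓕 𝓖 : RFiltration K V} {e : ι → V} (h𝓕 : 𝓕.Compatible e)
    (h𝓖 : 𝓖.Compatible e) (h : ∀ i, 𝓕.lambda (e i) = 𝓖.lambda (e i)) : 𝓕 = 𝓖 := by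
  refine F_injective (funext fun a ↦ ?_)
  have h_inter : range e ∩ (𝓕.F a : Set V) = range e ∩ (𝓖.F a : Set V) := by
    ext x
    refine and_congr_right ?_
    rintro ⟨i, rfl⟩
    exact mem_F_iff_of_lambda_eq (h i)
  rw [h𝓕 a, h𝓖 a, h_inter]

section OfBasis

variable (e : Basis ι K V) (z : ι → ℝ) (hz_above : BddAbove (range z))
  (hz_below : BddBelow (range z))

/-- The filtration in which the basis vector `e i` has value `z i`, namely
`𝓕_a V = span {e i | a ≤ z i}`. It inverts `𝓕 ↦ (λ_𝓕(e i))ᵢ`. -/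
def ofBasis : RFiltration K V where
  F a := span K (e '' {i | a ≤ z i})
  antitone _ _ hab := span_mono (image_mono fun _ hi ↦ hab.trans hi)
  eventually_bot := by
    obtain ⟨M, hM⟩ := hz_above
    refine ⟨M + 1, fun b hb ↦ ?_⟩
    have h_empty : {i | b ≤ z i} = ∅ :=
      eq_empty_of_forall_notMem fun i hi ↦
        ((hM (mem_range_self i)).trans_lt (lt_add_one M)).not_ge (hb.trans hi)
    rw [h_empty, image_empty, span_empty]
  eventually_top := by
    obtain ⟨m, hm⟩ := hz_below
    refine ⟨m, fun b hb ↦ ?_⟩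
    have h_univ : {i | b ≤ z i} = univ :=
      eq_univ_of_forall fun i ↦ hb.trans (hm (mem_range_self i))
    rw [h_univ, image_univ, e.span_eq]
  left_continuous a := by
    ext x
    simp only [mem_iInf, e.mem_span_image]
    exact ⟨fun hx b i hi ↦ b.2.le.trans (hx hi),
      fun hx i hi ↦ le_of_forall_lt_imp_le_of_dense fun b hb ↦ hx ⟨b, hb⟩ hi⟩

theorem mem_F_ofBasis {a : ℝ} {x : V} :
    x ∈ (ofBasis e z hz_above hz_below).F a ↔ ∀ i ∈ (e.repr x).support, a ≤ z i :=
  e.mem_span_image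

theorem basis_mem_F_ofBasis {a : ℝ} {i : ι} :
    e i ∈ (ofBasis e z hz_above hz_below).F a ↔ a ≤ z i :=
  e.self_mem_span_image

theorem compatible_ofBasis : (ofBasis e z hz_above hz_below).Compatible e := by
  refine fun a ↦ le_antisymm (span_mono ?_) (span_le.2 inter_subset_right)
  rintro _ ⟨i, hi, rfl⟩
  exact ⟨mem_range_self i, (basis_mem_F_ofBasis e z hz_above hz_below).2 hi⟩

theorem lambda_ofBasis_basis (i : ι) : (ofBasis e z hz_above hz_below).lambda (e i) = z i :=
  lambda_eq_of_forall_mem_F_iff fun _ ↦ basis_mem_F_ofBasis e z hz_above hz_below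

theorem lambda_ofBasis {x : V} (hx : (e.repr x).support.Nonempty) :
    (ofBasis e z hz_above hz_below).lambda x = (e.repr x).support.inf' hx z :=
  lambda_eq_of_forall_mem_F_iff fun _ ↦
    (mem_F_ofBasis e z hz_above hz_below).trans (Finset.le_inf'_iff hx z).symm

variable {z}

theorem supportedBy_ofBasis {Z : Set ℝ} (hzZ : ∀ i, z i ∈ Z) :
    (ofBasis e z hz_above hz_below).SupportedBy Z := by
  intro x hx
  have h_supp : (e.repr x).support.Nonempty :=
    Finsupp.support_nonempty_iff.2 (e.repr.map_ne_zero_iff.2 hx)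
  obtain ⟨i, -, hi⟩ := Finset.exists_mem_eq_inf' h_supp z
  rw [lambda_ofBasis e z hz_above hz_below h_supp, hi]
  exact hzZ i

end OfBasis

theorem bijection_onto_Zr_general (e : Basis ι K V) (Z : Set ℝ) :
    BijOn (fun (𝓕 : RFiltration K V) i ↦ 𝓕.lambda (e i))
      {𝓕 | 𝓕.Compatible e ∧ 𝓕.SupportedBy Z}
      {z | (∀ i, z i ∈ Z) ∧ BddAbove (range z) ∧ BddBelow (range z)} := by
  refine ⟨fun 𝓕 h𝓕 ↦ ?_, fun 𝓕 h𝓕 𝓖 h𝓖 h ↦ h𝓕.1.eq_of_lambda_eq h𝓖.1 (congrFun h), ?_⟩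
  · have h_range : range (fun i ↦ 𝓕.lambda (e i)) ⊆ 𝓕.lambda '' {0}ᶜ :=
      range_subset_iff.2 fun i ↦ mem_image_of_mem _ (e.ne_zero i)
    exact ⟨fun i ↦ h𝓕.2 (e i) (e.ne_zero i), 𝓕.bddAbove_lambda_image_compl_zero.mono h_range,
      𝓕.bddBelow_lambda_image_compl_zero.mono h_range⟩
  · rintro z ⟨hzZ, hz_above, hz_below⟩
    exact ⟨ofBasis e z hz_above hz_below,
      ⟨compatible_ofBasis e z hz_above hz_below, supportedBy_ofBasis e hz_above hz_below hzZ⟩,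
      funext (lambda_ofBasis_basis e z hz_above hz_below)⟩

end RFiltration

/-- **Proposition 5.1.** For a basis `e` of `V` and a nonempty `Z ⊆ ℝ`, the map
`𝓕 ↦ (λ_𝓕(e₁), …, λ_𝓕(e_r))` is a bijection from the set of `ℝ`-filtrations of `V`
compatible with `e` and supported by `Z` onto `Z^r`. -/
theorem RFiltration.bijection_onto_Zr
    (K V : Type*) [Field K] [AddCommGroup V] [Module K V] [FiniteDimensional K V]
    [Nontrivial V] (r : ℕ) (e : Module.Basis (Fin r) K V) (Z : Set ℝ) (hZ : Z.Nonempty) :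
    (∀ 𝓕 𝓖 : RFiltration K V, 𝓕.Compatible e → 𝓖.Compatible e →
      𝓕.SupportedBy Z → 𝓖.SupportedBy Z →
      (∀ i : Fin r, 𝓕.lambda (e i) = 𝓖.lambda (e i)) → 𝓕 = 𝓖) ∧
    (∀ z : Fin r → ℝ, (∀ i, z i ∈ Z) →
      ∃ 𝓕 : RFiltration K V, 𝓕.Compatible e ∧ 𝓕.SupportedBy Z ∧
        ∀ i : Fin r, 𝓕.lambda (e i) = z i) := by
  obtain ⟨-, h_inj, h_surj⟩ := bijection_onto_Zr_general e Z
  refine ⟨fun _ _ h𝓕 h𝓖 h𝓕Z h𝓖Z h ↦ h_inj ⟨h𝓕, h𝓕Z⟩ ⟨h𝓖, h𝓖Z⟩ (funext h), fun z hz ↦ ?_⟩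
  simpa only [Set.mem_image, Set.mem_ofPred_eq, and_assoc, funext_iff] using
    h_surj ⟨hz, (Set.finite_range z).bddAbove, (Set.finite_range z).bddBelow⟩
end

section
/- Let $K$ be a field, and let $V$ and $W$ be nonzero finite-dimensional $K$-vector spaces with $\mathbb{R}$-filtrations $\mathcal{F}$ and $\mathcal{G}$ respectively. Let $(e_1, \ldots, e_r)$ be a basis of $V$ compatible with $\mathcal{F}$ and $(f_1, \ldots, f_s)$ a basis of $W$ compatible with $\mathcal{G}$. Define the tensor product filtration $\mathcal{H}$ of $V \otimes_K W$ by $\mathcal{H}_\lambda (V \otimes W) = \sum_{\lambda_1 + \lambda_2 \geq \lambda} (\mathcal{F}_{\lambda_1} V) \otimes (\mathcal{G}_{\lambda_2} W)$, where $(\mathcal{F}_{\lambda_1} V) \otimes (\mathcal{G}_{\lambda_2} W)$ denotes the image of $\mathcal{F}_{\lambda_1} V \otimes_K \mathcal{G}_{\lambda_2} W$ in $V \otimes_K W$. Then for every $\lambda \in \mathbb{R}$, the subspace $\mathcal{H}_\lambda(V \otimes W)$ is the linear span of the set $\{ e_i \otimes f_j : \lambda_{\mathcal{F}}(e_i) +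 \lambda_{\mathcal{G}}(f_j) \geq \lambda \}$; in particular the basis $(e_i \otimes f_j)_{i,j}$ of $V \otimes_K W$ is compatible with $\mathcal{H}$, and $\lambda_{\mathcal{H}}(e_i \otimes f_j) = \lambda_{\mathcal{F}}(e_i) + \lambda_{\mathcal{G}}(f_j)$. -/
open scoped TensorProduct

/-!
If `x ∉ M` and `y ∉ N` for subspaces `M ⊆ V` and `N ⊆ W`, then `x ⊗ y ∉ M ⊗ W + V ⊗ N`, as a product
of two linear functionals shows. Let `M = 𝓕_b V` and `N = 𝓖_c W`. Then `a₁ + a₂ ≥ b + c` forces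
`a₁ ≥ b` or `a₂ ≥ c`, so that `ℋ_{b+c} ⊆ M ⊗ W + V ⊗ N`. Taking
`b` and `c` just above `λ_𝓕(x)` and `λ_𝓖(y)` gives `λ_ℋ(x ⊗ y) = λ_𝓕(x) + λ_𝓖(y)` for all nonzero
`x` and `y`. By compatibility each `𝓕_{a₁} V ⊗ 𝓖_{a₂} W` is spanned by the `eᵢ ⊗ fⱼ` with
`eᵢ ∈ 𝓕_{a₁} V` and `fⱼ ∈ 𝓖_{a₂} W`, so the value of `λ_ℋ(eᵢ ⊗ fⱼ)` determines `ℋ_a`.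
-/

theorem tmul_notMem_map₂_sup_map₂ {K V W : Type*} [Field K] [AddCommGroup V] [Module K V]
    [AddCommGroup W] [Module K W] {M : Submodule K V} {N : Submodule K W} {x : V} {y : W}
    (hx : x ∉ M) (hy : y ∉ N) :
    x ⊗ₜ[K] y ∉ Submodule.map₂ (TensorProduct.mk K V W) M ⊤ ⊔
      Submodule.map₂ (TensorProduct.mk K V W) ⊤ N := by
  obtain ⟨φ, hφx, hφM⟩ := Submodule.exists_le_ker_of_notMem hx
  obtain ⟨ψ, hψy, hψN⟩ := Submodule.exists_le_ker_of_notMem hy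
  let φψ : V ⊗[K] W →ₗ[K] K := LinearMap.mul' K K ∘ₗ TensorProduct.map φ ψ
  have le_ker : Submodule.map₂ (TensorProduct.mk K V W) M ⊤ ⊔
      Submodule.map₂ (TensorProduct.mk K V W) ⊤ N ≤ LinearMap.ker φψ := by
    refine sup_le (Submodule.map₂_le.2 fun v hv w _ => ?_) (Submodule.map₂_le.2 fun v _ w hw => ?_)
    · have hφv : φ v = 0 := hφM hv
      simp [φψ, hφv]
    · have hψw : ψ w = 0 := hψN hw
      simp [φψ, hψw]
  exact fun hmem => mul_ne_zero hφx hψy (by simpa [φψ] using le_ker hmem)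

namespace RFiltration

section Lambda

variable {K V : Type*} [Field K] [AddCommGroup V] [Module K V] (𝓕 : RFiltration K V)

theorem setOf_mem_nonempty (x : V) : {a : ℝ | x ∈ 𝓕.F a}.Nonempty := by
  obtain ⟨a, ha⟩ := 𝓕.eventually_top
  exact ⟨a, by simp [ha a le_rfl]⟩

theorem bddAbove_setOf_mem {x : V} (hx : x ≠ 0) : BddAbove {a : ℝ | x ∈ 𝓕.F a} := by
  obtain ⟨c, hc⟩ := 𝓕.eventually_bot
  refine ⟨c, fun b (hb : x ∈ 𝓕.F b) => le_of_not_ge fun hcb => hx ?_⟩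
  simpa [hc b hcb] using hb

theorem mem_iff_le_lambda {x : V} (hx : x ≠ 0) {a : ℝ} : x ∈ 𝓕.F a ↔ a ≤ 𝓕.lambda x := by
  refine ⟨fun h => le_csSup (𝓕.bddAbove_setOf_mem hx) h, fun h => ?_⟩
  rw [𝓕.left_continuous a, Submodule.mem_iInf]
  rintro ⟨b, hb⟩
  obtain ⟨c, hc, hbc⟩ := exists_lt_of_lt_csSup (𝓕.setOf_mem_nonempty x) (hb.trans_le h)
  exact 𝓕.antitone hbc.le hc

end Lambda

section Tensor

variable {K V W : Type*} [Field K] [AddCommGroup V] [Module K V] [AddCommGroup W] [Module K W]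
  (𝓕 : RFiltration K V) (𝓖 : RFiltration K W)

/-- The tensor product filtration `ℋ_a = ∑_{a₁ + a₂ ≥ a} 𝓕_{a₁} V ⊗ 𝓖_{a₂} W` of `V ⊗ W`, as a bare
family of subspaces; each summand is the image of `𝓕_{a₁} V ⊗ 𝓖_{a₂} W` in `V ⊗ W`. -/
def tensorFiltration (a : ℝ) : Submodule K (V ⊗[K] W) :=
  ⨆ p : ℝ × ℝ, ⨆ _ : a ≤ p.1 + p.2,
    LinearMap.range (TensorProduct.mapIncl (𝓕.F p.1) (𝓖.F p.2))

variable {𝓕 𝓖}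

theorem tensorFiltration_le_iff {a : ℝ} {N : Submodule K (V ⊗[K] W)} :
    tensorFiltration 𝓕 𝓖 a ≤ N ↔ ∀ b c : ℝ, a ≤ b + c →
      Submodule.map₂ (TensorProduct.mk K V W) (𝓕.F b) (𝓖.F c) ≤ N := by
  simp only [tensorFiltration, TensorProduct.range_mapIncl, iSup_le_iff, Prod.forall]

theorem tmul_mem_tensorFiltration {a b c : ℝ} {x : V} {y : W} (habc : a ≤ b + c)
    (hx : x ∈ 𝓕.F b) (hy : y ∈ 𝓖.F c) : x ⊗ₜ[K] y ∈ tensorFiltration 𝓕 𝓖 a :=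
  tensorFiltration_le_iff.1 le_rfl b c habc (Submodule.apply_mem_map₂ _ hx hy)

theorem tensorFiltration_add_le_sup (b c : ℝ) :
    tensorFiltration 𝓕 𝓖 (b + c) ≤ Submodule.map₂ (TensorProduct.mk K V W) (𝓕.F b) ⊤ ⊔
      Submodule.map₂ (TensorProduct.mk K V W) ⊤ (𝓖.F c) := by
  refine tensorFiltration_le_iff.2 fun b' c' h => ?_
  rcases le_or_gt b b' with hb | hb
  · exact le_sup_of_le_left (Submodule.map₂_le_map₂ (𝓕.antitone hb) le_top)
  · have hc : c ≤ c' := by linarith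
    exact le_sup_of_le_right (Submodule.map₂_le_map₂ le_top (𝓖.antitone hc))

theorem tmul_mem_tensorFiltration_iff {x : V} {y : W} (hx : x ≠ 0) (hy : y ≠ 0) {a : ℝ} :
    x ⊗ₜ[K] y ∈ tensorFiltration 𝓕 𝓖 a ↔ a ≤ 𝓕.lambda x + 𝓖.lambda y := by
  refine ⟨fun hmem => le_of_not_gt fun hlt => ?_, fun h => tmul_mem_tensorFiltration h
    ((𝓕.mem_iff_le_lambda hx).2 le_rfl) ((𝓖.mem_iff_le_lambda hy).2 le_rfl)⟩
  obtain ⟨b, hxb, hba⟩ : ∃ b, 𝓕.lambda x < b ∧ b < a - 𝓖.lambda y :=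
    exists_between (lt_sub_iff_add_lt.2 hlt)
  have hx_notMem : x ∉ 𝓕.F b := (𝓕.mem_iff_le_lambda hx).not.2 hxb.not_ge
  have hy_notMem : y ∉ 𝓖.F (a - b) := (𝓖.mem_iff_le_lambda hy).not.2 (lt_sub_comm.1 hba).not_ge
  refine tmul_notMem_map₂_sup_map₂ hx_notMem hy_notMem (tensorFiltration_add_le_sup b (a - b) ?_)
  rwa [add_sub_cancel]

theorem sSup_tmul_mem_tensorFiltration {x : V} {y : W} (hx : x ≠ 0) (hy : y ≠ 0) :
    sSup {a : ℝ | x ⊗ₜ[K] y ∈ tensorFiltration 𝓕 𝓖 a} = 𝓕.lambda x + 𝓖.lambda y := by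
  simp only [tmul_mem_tensorFiltration_iff hx hy]
  exact csSup_Iic

theorem tensorFiltration_eq_span {ι κ : Type*} {e : ι → V} {f : κ → W} (he : 𝓕.Compatible e)
    (hf : 𝓖.Compatible f) (he0 : ∀ i, e i ≠ 0) (hf0 : ∀ j, f j ≠ 0) (a : ℝ) :
    tensorFiltration 𝓕 𝓖 a = Submodule.span K
      {x : V ⊗[K] W | ∃ i : ι, ∃ j : κ,
        a ≤ 𝓕.lambda (e i) + 𝓖.lambda (f j) ∧ x = e i ⊗ₜ[K] f j} := by
  apply le_antisymm
  · refine tensorFiltration_le_iff.2 fun b c habc => ?_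
    rw [he b, hf c, Submodule.map₂_span_span]
    apply Submodule.span_mono
    rintro _ ⟨_, ⟨⟨i, rfl⟩, hi⟩, _, ⟨⟨j, rfl⟩, hj⟩, rfl⟩
    have hmem : e i ⊗ₜ[K] f j ∈ tensorFiltration 𝓕 𝓖 a := tmul_mem_tensorFiltration habc hi hj
    exact ⟨i, j, (tmul_mem_tensorFiltration_iff (he0 i) (hf0 j)).1 hmem, rfl⟩
  · rw [Submodule.span_le]
    rintro _ ⟨i, j, hij, rfl⟩
    exact (tmul_mem_tensorFiltration_iff (he0 i) (hf0 j)).2 hij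

theorem tensor_basis_compatible_general {ι κ : Type*} {e : ι → V} {f : κ → W}
    (he : 𝓕.Compatible e) (hf : 𝓖.Compatible f) (he0 : ∀ i, e i ≠ 0) (hf0 : ∀ j, f j ≠ 0) :
    (∀ a : ℝ, tensorFiltration 𝓕 𝓖 a = Submodule.span K
        {x : V ⊗[K] W | ∃ i : ι, ∃ j : κ,
          a ≤ 𝓕.lambda (e i) + 𝓖.lambda (f j) ∧ x = e i ⊗ₜ[K] f j}) ∧
    (∀ (x : V) (y : W), x ≠ 0 → y ≠ 0 →
      sSup {a : ℝ | x ⊗ₜ[K] y ∈ tensorFiltration 𝓕 𝓖 a} = 𝓕.lambda x + 𝓖.lambda y) :=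
  ⟨tensorFiltration_eq_span he hf he0 hf0, fun _ _ => sSup_tmul_mem_tensorFiltration⟩

end Tensor

end RFiltration

/-- **Compatibility of tensor-product bases with the tensor product filtration (Section 5.3).**
If `e` is a basis of `V` compatible with `𝓕` and `f` a basis of `W` compatible with `𝓖`,
and `ℋ_a = ∑_{a₁+a₂ ≥ a} 𝓕_{a₁}V ⊗ 𝓖_{a₂}W` is the tensor product filtration of `V ⊗ W`,
then each `ℋ_a` is spanned by `{eᵢ ⊗ fⱼ : λ_𝓕(eᵢ) + λ_𝓖(fⱼ) ≥ a}`; in particular the basis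
`(eᵢ ⊗ fⱼ)` is compatible with `ℋ` and `λ_ℋ(eᵢ ⊗ fⱼ) = λ_𝓕(eᵢ) + λ_𝓖(fⱼ)`. -/
theorem RFiltration.tensor_basis_compatible
    (K V W : Type*) [Field K]
    [AddCommGroup V] [Module K V] [FiniteDimensional K V] [Nontrivial V]
    [AddCommGroup W] [Module K W] [FiniteDimensional K W] [Nontrivial W]
    (𝓕 : RFiltration K V) (𝓖 : RFiltration K W) (r s : ℕ)
    (e : Module.Basis (Fin r) K V) (f : Module.Basis (Fin s) K W)
    (he : 𝓕.Compatible e) (hf : 𝓖.Compatible f)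
    (ℋ : ℝ → Submodule K (V ⊗[K] W))
    (hℋ : ∀ a : ℝ, ℋ a = ⨆ p : ℝ × ℝ, ⨆ _ : a ≤ p.1 + p.2,
      LinearMap.range (TensorProduct.map (𝓕.F p.1).subtype (𝓖.F p.2).subtype)) :
    (∀ a : ℝ, ℋ a = Submodule.span K
        {x : V ⊗[K] W | ∃ i : Fin r, ∃ j : Fin s,
          a ≤ 𝓕.lambda (e i) + 𝓖.lambda (f j) ∧ x = e i ⊗ₜ[K] f j}) ∧
    (∀ (i : Fin r) (j : Fin s),
      sSup {a : ℝ | e i ⊗ₜ[K] f j ∈ ℋ a} = 𝓕.lambda (e i) + 𝓖.lambda (f j)) := by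
  obtain rfl : ℋ = tensorFiltration 𝓕 𝓖 := funext hℋ
  have h := tensor_basis_compatible_general he hf e.ne_zero f.ne_zero
  exact ⟨h.1, fun i j => h.2 (e i) (f j) (e.ne_zero i) (f.ne_zero j)⟩
end
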